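/- arXiv:1205.2946 — 2 statements merged into one kernel-verified Lean document; each statement's English description precedes it below -/
import Mathlib

section
/- Let V = V(ℓ) ⊗ V(ℓ₁,a₁) ⊗ ⋯ ⊗ V(ℓₙ,aₙ) and V' = V(ℓ') ⊗ V(ℓ'₁,a'₁) ⊗ ⋯ ⊗ V(ℓ'ₘ,a'ₘ) be tensor products of evaluation modules (all ℓᵢ, ℓ'ⱼ ≥ 1 and aᵢ, a'ⱼ ≠ 0), both irreducible as U'_q(L(sl₂))-modules. Then V and V' are isomorphic as U'_q(L(sl₂))-modules (i.e., there is a linear bijection V → V' intertwining all five operators) if and only if ℓ = ℓ', n = m, and there is a permutation π of {1,…,n} with (ℓᵢ,aᵢ) = (ℓ'_{π(i)},a'_{π(i)}) for all i. -/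
/-!
The idea is to attach to a module `V` with highest weight vector `v` the functional
`φ_V : w ↦ (coefficient of v in w v)` on words `w` in the five generators, and to show that, for the
tensor products at hand, `φ_V` is a complete invariant which can be computed explicitly. This
functional plays the part of the Drinfeld polynomial.

*The functionals form a ring.* Reading the coproduct letter by letter defines a convolution product
on functionals on words, and matrix coefficients of tensor products are products of matrix
coefficients of the factors (`mc_tpG`). Hence `φ_V` is the product of the functionals
`coef q aᵢ ℓᵢ 0` of the factors. Since `V(ℓ,a)` is the submodule generated by the highest weight
vector in a tensor product of two-dimensional modules `V(1,c)`, with `c` running through a string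
`b, bq², …, bq^(2ℓ-2)` where `a = b q^(ℓ-1)`, its functional is the product of the functionals of
these `V(1,c)` (`fusion`, `coef_eq_prod`). For `a = 0` the string is `0, …, 0`. The functionals of
the `V(1,c)` commute, because of the `R`-matrix (`coef_one_comm`), and a product of them determines
the multiset of the parameters `c`: the words `(E₁⁺)ⁱ (E₀⁺)ⁱ` give their elementary symmetric
functions (`prod_inj`). So `φ_V` and the union, with multiplicities, of the strings of the factors
determine each other (`mc_eq_iff`).

*The functional determines an irreducible module.* If `φ_V = φ_V'`, the submodule `N ⊆ V × V'`
generated by `(v, v')` projects onto `V` and meets `V × 0` trivially if `V` is irreducible. So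
`dim V ≤ dim V'` (`finrank_le_of_mc_eq`), and `N` is the graph of an isomorphism if `V'` is
irreducible too (`exists_equiv_of_mc_eq`). Conversely, an isomorphism respects the weight spaces of
`K₁`, hence the highest weight vectors up to a scalar, and preserves the functional
(`mc_eq_of_equiv`).

*The strings can be recovered from their union.* By the inequality of dimensions, the strings of an
irreducible tensor product minimize `∏ (ℓᵢ + 1)` among all families of strings with the same union
(`minStr_of_irr`). In a minimal family, two strings whose union is a string are nested, since
otherwise replacing them by union and intersection would decrease the product. It follows that
minimal families with the same union agree (`MinStr.unique`): a longest string of either of them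
belongs to both. The factors `V(ℓ)` and `V(ℓ')` account exactly for the parameters `0`.
-/

open scoped TensorProduct

noncomputable section

/-- The `q`-integer `[t] = (q^t - q^(-t))/(q - q⁻¹)`. -/
def qnum (q : ℂ) (t : ℤ) : ℂ := (q ^ t - q ^ (-t)) / (q - q⁻¹)

/-- The `q`-factorial `[t]! = [t][t-1]⋯[1]`. -/
def qfac (q : ℂ) (t : ℕ) : ℂ := ∏ k ∈ Finset.range t, qnum q ((k : ℤ) + 1)

/-- Commutator `[X,Y] = XY - YX`. -/
def brk {V : Type*} [AddCommGroup V] [Module ℂ V] (X Y : Module.End ℂ V) :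
    Module.End ℂ V := X * Y - Y * X

/-- `q`-commutator `[X,Y]_t = t XY - t⁻¹ YX`. -/
def brkq {V : Type*} [AddCommGroup V] [Module ℂ V] (t : ℂ) (X Y : Module.End ℂ V) :
    Module.End ℂ V := t • (X * Y) - t⁻¹ • (Y * X)

/-- A `U'_q(L(sl₂))`-module structure on a complex vector space `V`:
operators `(E₀⁺, E₁⁺, E₁⁻, K₀, K₁)` with `K₀, K₁` mutually inverse (hence invertible) and
the defining relations; `K₀ = K₁⁻¹` throughout. -/
structure IsUqpRep (q : ℂ) {V : Type*} [AddCommGroup V] [Module ℂ V]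
    (E0 E1p E1m K0 K1 : Module.End ℂ V) : Prop where
  K0K1 : K0 * K1 = 1
  K1K0 : K1 * K0 = 1
  K0E0 : K0 * E0 = q ^ 2 • (E0 * K0)
  K1E1p : K1 * E1p = q ^ 2 • (E1p * K1)
  K1E1m : K1 * E1m = (q ^ 2)⁻¹ • (E1m * K1)
  K1E0 : K1 * E0 = (q ^ 2)⁻¹ • (E0 * K1)
  K0E1p : K0 * E1p = (q ^ 2)⁻¹ • (E1p * K0)
  K0E1m : K0 * E1m = q ^ 2 • (E1m * K0)
  e1comm : E1p * E1m - E1m * E1p = (q - q⁻¹)⁻¹ • (K1 - K0)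
  e0e1m : E0 * E1m = E1m * E0
  serre01 : brk E0 (brkq q⁻¹ E0 (brkq q E0 E1p)) = 0
  serre10 : brk E1p (brkq q⁻¹ E1p (brkq q E1p E0)) = 0

/-- `K₀` of the evaluation module `V(ℓ,a)`: `K₀ vᵢ = q^(2i-ℓ) vᵢ`. -/
def evalK0 (q : ℂ) (ℓ : ℕ) : Module.End ℂ (Fin (ℓ + 1) → ℂ) :=
  (Matrix.diagonal fun i : Fin (ℓ + 1) => q ^ (2 * (i : ℤ) - ℓ)).mulVecLin

/-- `K₁` of the evaluation module `V(ℓ,a)`: `K₁ vᵢ = q^(ℓ-2i) vᵢ`. -/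
def evalK1 (q : ℂ) (ℓ : ℕ) : Module.End ℂ (Fin (ℓ + 1) → ℂ) :=
  (Matrix.diagonal fun i : Fin (ℓ + 1) => q ^ ((ℓ : ℤ) - 2 * i)).mulVecLin

/-- `E₀⁺` of the evaluation module `V(ℓ,a)`: `E₀⁺ vᵢ = a q [i+1] vᵢ₊₁`. -/
def evalE0 (q a : ℂ) (ℓ : ℕ) : Module.End ℂ (Fin (ℓ + 1) → ℂ) :=
  (Matrix.of fun j i : Fin (ℓ + 1) =>
    if (j : ℕ) = (i : ℕ) + 1 then a * q * qnum q ((i : ℤ) + 1) else 0).mulVecLin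

/-- `E₁⁺` of the evaluation module `V(ℓ,a)`: `E₁⁺ vᵢ = [ℓ-i+1] vᵢ₋₁`. -/
def evalE1p (q : ℂ) (ℓ : ℕ) : Module.End ℂ (Fin (ℓ + 1) → ℂ) :=
  (Matrix.of fun j i : Fin (ℓ + 1) =>
    if (i : ℕ) = (j : ℕ) + 1 then qnum q ((ℓ : ℤ) - (i : ℤ) + 1) else 0).mulVecLin

/-- `E₁⁻` of the evaluation module `V(ℓ,a)`: `E₁⁻ vᵢ = [i+1] vᵢ₊₁`. -/
def evalE1m (q : ℂ) (ℓ : ℕ) : Module.End ℂ (Fin (ℓ + 1) → ℂ) :=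
  (Matrix.of fun j i : Fin (ℓ + 1) =>
    if (j : ℕ) = (i : ℕ) + 1 then qnum q ((i : ℤ) + 1) else 0).mulVecLin

/-- Irreducibility: the only subspaces invariant under all five operators are `⊥` and `⊤`. -/
def IsIrred {V : Type*} [AddCommGroup V] [Module ℂ V]
    (E0 E1p E1m K0 K1 : Module.End ℂ V) : Prop :=
  ∀ W : Submodule ℂ V, (∀ v ∈ W, E0 v ∈ W) → (∀ v ∈ W, E1p v ∈ W) →
    (∀ v ∈ W, E1m v ∈ W) → (∀ v ∈ W, K0 v ∈ W) → (∀ v ∈ W, K1 v ∈ W) →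
    W = ⊥ ∨ W = ⊤

/-- Type `(1,1)`: `K₀` is diagonalizable with all eigenvalues of the form `q^(2i-d)`,
`0 ≤ i ≤ d`, i.e. the corresponding eigenspaces span. -/
def IsType11 (q : ℂ) {V : Type*} [AddCommGroup V] [Module ℂ V] (K0 : Module.End ℂ V) : Prop :=
  ∃ d : ℕ, ⨆ i : Fin (d + 1), Module.End.eigenspace K0 (q ^ (2 * (i : ℤ) - d)) = ⊤

/-- `Δ(K₀) = K₀ ⊗ K₀` on `V(ℓ,a) ⊗ V(m,b)`. -/
def dK0 (q : ℂ) (ℓ m : ℕ) :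
    Module.End ℂ (TensorProduct ℂ (Fin (ℓ + 1) → ℂ) (Fin (m + 1) → ℂ)) :=
  TensorProduct.map (evalK0 q ℓ) (evalK0 q m)

/-- `Δ(K₁) = K₁ ⊗ K₁` on `V(ℓ,a) ⊗ V(m,b)`. -/
def dK1 (q : ℂ) (ℓ m : ℕ) :
    Module.End ℂ (TensorProduct ℂ (Fin (ℓ + 1) → ℂ) (Fin (m + 1) → ℂ)) :=
  TensorProduct.map (evalK1 q ℓ) (evalK1 q m)

/-- `Δ(E₀⁺) = K₀ ⊗ E₀⁺ + E₀⁺ ⊗ 1` on `V(ℓ,a) ⊗ V(m,b)`. -/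
def dE0 (q : ℂ) (ℓ m : ℕ) (a b : ℂ) :
    Module.End ℂ (TensorProduct ℂ (Fin (ℓ + 1) → ℂ) (Fin (m + 1) → ℂ)) :=
  TensorProduct.map (evalK0 q ℓ) (evalE0 q b m) +
    TensorProduct.map (evalE0 q a ℓ) LinearMap.id

/-- `Δ(E₁⁺) = K₁ ⊗ E₁⁺ + E₁⁺ ⊗ 1` on `V(ℓ,a) ⊗ V(m,b)`. -/
def dE1p (q : ℂ) (ℓ m : ℕ) :
    Module.End ℂ (TensorProduct ℂ (Fin (ℓ + 1) → ℂ) (Fin (m + 1) → ℂ)) :=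
  TensorProduct.map (evalK1 q ℓ) (evalE1p q m) +
    TensorProduct.map (evalE1p q ℓ) LinearMap.id

/-- `Δ(E₁⁻) = 1 ⊗ E₁⁻ + E₁⁻ ⊗ K₁⁻¹` on `V(ℓ,a) ⊗ V(m,b)` (note `K₁⁻¹ = K₀`). -/
def dE1m (q : ℂ) (ℓ m : ℕ) :
    Module.End ℂ (TensorProduct ℂ (Fin (ℓ + 1) → ℂ) (Fin (m + 1) → ℂ)) :=
  TensorProduct.map LinearMap.id (evalE1m q m) +
    TensorProduct.map (evalE1m q ℓ) (evalK0 q m)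

/-- A linear map intertwines the five structure operators of two
`U'_q(L(sl₂))`-module structures. -/
def IntertwinesAll {V W : Type*} [AddCommGroup V] [Module ℂ V] [AddCommGroup W] [Module ℂ W]
    (σ : V →ₗ[ℂ] W) (A0 A1p A1m AK0 AK1 : Module.End ℂ V)
    (B0 B1p B1m BK0 BK1 : Module.End ℂ W) : Prop :=
  σ ∘ₗ A0 = B0 ∘ₗ σ ∧ σ ∘ₗ A1p = B1p ∘ₗ σ ∧ σ ∘ₗ A1m = B1m ∘ₗ σ ∧
    σ ∘ₗ AK0 = BK0 ∘ₗ σ ∧ σ ∘ₗ AK1 = BK1 ∘ₗ σ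

/-- The underlying space of an iterated tensor product of evaluation modules. -/
abbrev TPS {N : ℕ} (ns : Fin N → ℕ) : Type := ⨂[ℂ] i, (Fin (ns i + 1) → ℂ)

/-- `Δ(K₀)` on an iterated tensor product of evaluation modules. -/
def tpK0 (q : ℂ) {N : ℕ} (ns : Fin N → ℕ) : Module.End ℂ (TPS ns) :=
  PiTensorProduct.map fun i => evalK0 q (ns i)

/-- `Δ(K₁)` on an iterated tensor product of evaluation modules. -/
def tpK1 (q : ℂ) {N : ℕ} (ns : Fin N → ℕ) : Module.End ℂ (TPS ns) :=
  PiTensorProduct.map fun i => evalK1 q (ns i)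

/-- `Δ(E₀⁺) = Σⱼ K₀ ⊗ ⋯ ⊗ K₀ ⊗ E₀⁺ ⊗ 1 ⊗ ⋯ ⊗ 1` (iterated coproduct of
`Δ(E₀⁺) = K₀ ⊗ E₀⁺ + E₀⁺ ⊗ 1`). -/
def tpE0 (q : ℂ) {N : ℕ} (ns : Fin N → ℕ) (as : Fin N → ℂ) : Module.End ℂ (TPS ns) :=
  ∑ j : Fin N, PiTensorProduct.map fun i =>
    if i < j then evalK0 q (ns i)
    else if i = j then evalE0 q (as i) (ns i)
    else LinearMap.id

/-- `Δ(E₁⁺) = Σⱼ K₁ ⊗ ⋯ ⊗ K₁ ⊗ E₁⁺ ⊗ 1 ⊗ ⋯ ⊗ 1`. -/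
def tpE1p (q : ℂ) {N : ℕ} (ns : Fin N → ℕ) : Module.End ℂ (TPS ns) :=
  ∑ j : Fin N, PiTensorProduct.map fun i =>
    if i < j then evalK1 q (ns i)
    else if i = j then evalE1p q (ns i)
    else LinearMap.id

/-- `Δ(E₁⁻) = Σⱼ 1 ⊗ ⋯ ⊗ 1 ⊗ E₁⁻ ⊗ K₁⁻¹ ⊗ ⋯ ⊗ K₁⁻¹` (note `K₁⁻¹ = K₀`). -/
def tpE1m (q : ℂ) {N : ℕ} (ns : Fin N → ℕ) : Module.End ℂ (TPS ns) :=
  ∑ j : Fin N, PiTensorProduct.map fun i =>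
    if i < j then LinearMap.id
    else if i = j then evalE1m q (ns i)
    else evalK0 q (ns i)

/-! ### Functionals on words and their convolution product -/

/-- Names for the five generators `K₀, K₁, E₀⁺, E₁⁺, E₁⁻`. -/
inductive Gen
  | K0 | K1 | E0 | E1p | E1m

/-- Linear functionals on the free algebra generated by the five letters of `Gen`, encoded by
their values on words. -/
def WF : Type := List Gen → ℂ

namespace WF

instance : AddCommGroup WF := inferInstanceAs (AddCommGroup (List Gen → ℂ))
instance : Module ℂ WF := inferInstanceAs (Module ℂ (List Gen → ℂ))

@[simp] lemma add_apply (φ ψ : WF) (w : List Gen) : (φ + ψ) w = φ w + ψ w := rfl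
@[simp] lemma zero_apply (w : List Gen) : (0 : WF) w = 0 := rfl
@[simp] lemma smul_apply (c : ℂ) (φ : WF) (w : List Gen) : (c • φ) w = c * φ w := rfl

/-- The functional `w ↦ φ (x w)`. -/
def sh (x : Gen) (φ : WF) : WF := fun w => φ (x :: w)

@[simp] lemma sh_add (x : Gen) (φ ψ : WF) : sh x (φ + ψ) = sh x φ + sh x ψ := rfl
@[simp] lemma sh_zero (x : Gen) : sh x 0 = 0 := rfl
@[simp] lemma sh_smul (x : Gen) (c : ℂ) (φ : WF) : sh x (c • φ) = c • sh x φ := rfl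

lemma cons_apply (φ : WF) (x : Gen) (w : List Gen) : φ (x :: w) = sh x φ w := rfl

/-- The convolution `(φ ⊗ ψ) (Δ w)`, computed letter by letter from the coproduct. -/
def conv : List Gen → WF → WF → ℂ
  | [], φ, ψ => φ [] * ψ []
  | .K0 :: w, φ, ψ => conv w (sh .K0 φ) (sh .K0 ψ)
  | .K1 :: w, φ, ψ => conv w (sh .K1 φ) (sh .K1 ψ)
  | .E0 :: w, φ, ψ => conv w (sh .K0 φ) (sh .E0 ψ) + conv w (sh .E0 φ) ψ
  | .E1p :: w, φ, ψ => conv w (sh .K1 φ) (sh .E1p ψ) + conv w (sh .E1p φ) ψ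
  | .E1m :: w, φ, ψ => conv w φ (sh .E1m ψ) + conv w (sh .E1m φ) (sh .K0 ψ)

/-- The counit on words. -/
def counit : List Gen → ℂ
  | [] => 1
  | .K0 :: w => counit w
  | .K1 :: w => counit w
  | .E0 :: _ => 0
  | .E1p :: _ => 0
  | .E1m :: _ => 0

instance : Mul WF := ⟨fun φ ψ w => conv w φ ψ⟩
instance : One WF := ⟨counit⟩

@[simp] lemma mul_nil (φ ψ : WF) : (φ * ψ) [] = φ [] * ψ [] := rfl
@[simp] lemma one_nil : (1 : WF) [] = 1 := rfl
@[simp] lemma sh_K0_mul (φ ψ : WF) : sh .K0 (φ * ψ) = sh .K0 φ * sh .K0 ψ := rfl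
@[simp] lemma sh_K1_mul (φ ψ : WF) : sh .K1 (φ * ψ) = sh .K1 φ * sh .K1 ψ := rfl
@[simp] lemma sh_E0_mul (φ ψ : WF) :
    sh .E0 (φ * ψ) = sh .K0 φ * sh .E0 ψ + sh .E0 φ * ψ := rfl
@[simp] lemma sh_E1p_mul (φ ψ : WF) :
    sh .E1p (φ * ψ) = sh .K1 φ * sh .E1p ψ + sh .E1p φ * ψ := rfl
@[simp] lemma sh_E1m_mul (φ ψ : WF) :
    sh .E1m (φ * ψ) = φ * sh .E1m ψ + sh .E1m φ * sh .K0 ψ := rfl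
@[simp] lemma sh_K0_one : sh .K0 1 = 1 := rfl
@[simp] lemma sh_K1_one : sh .K1 1 = 1 := rfl
@[simp] lemma sh_E0_one : sh .E0 1 = 0 := rfl
@[simp] lemma sh_E1p_one : sh .E1p 1 = 0 := rfl
@[simp] lemma sh_E1m_one : sh .E1m 1 = 0 := rfl

lemma smul_mul' (c : ℂ) (φ ψ : WF) : (c • φ) * ψ = c • (φ * ψ) := by
  funext w
  induction w generalizing φ ψ with
  | nil => simp [mul_assoc]
  | cons x w ih => cases x <;> simp only [cons_apply] <;> simp [ih, mul_add]

lemma mul_smul' (c : ℂ) (φ ψ : WF) : φ * (c • ψ) = c • (φ * ψ) := by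
  funext w
  induction w generalizing φ ψ with
  | nil => simp [mul_left_comm]
  | cons x w ih => cases x <;> simp only [cons_apply] <;> simp [ih, mul_add]

lemma add_mul' (φ χ ψ : WF) : (φ + χ) * ψ = φ * ψ + χ * ψ := by
  funext w
  induction w generalizing φ χ ψ with
  | nil => simp [add_mul]
  | cons x w ih => cases x <;> simp only [cons_apply] <;> simp [ih] <;> ring

lemma mul_add' (φ χ ψ : WF) : ψ * (φ + χ) = ψ * φ + ψ * χ := by
  funext w
  induction w generalizing φ χ ψ with
  | nil => simp [mul_add]
  | cons x w ih => cases x <;> simp only [cons_apply] <;> simp [ih] <;> ring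

lemma zero_mul' (φ : WF) : 0 * φ = 0 := by
  simpa using smul_mul' 0 0 φ

lemma mul_zero' (φ : WF) : φ * 0 = 0 := by
  simpa using mul_smul' 0 φ 0

lemma mul_assoc' (φ ψ χ : WF) : φ * ψ * χ = φ * (ψ * χ) := by
  funext w
  induction w generalizing φ ψ χ with
  | nil => simp [mul_assoc]
  | cons x w ih =>
    cases x <;> simp only [cons_apply] <;> simp [ih, add_mul', mul_add'] <;> ring

lemma one_mul' (φ : WF) : 1 * φ = φ := by
  funext w
  induction w generalizing φ with
  | nil => simp
  | cons x w ih => cases x <;> simp only [cons_apply] <;> simp [ih, zero_mul']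

lemma mul_one' (φ : WF) : φ * 1 = φ := by
  funext w
  induction w generalizing φ with
  | nil => simp
  | cons x w ih => cases x <;> simp only [cons_apply] <;> simp [ih, mul_zero']

instance : Ring WF where
  left_distrib a b c := mul_add' b c a
  right_distrib a b c := add_mul' a b c
  zero_mul := zero_mul'
  mul_zero := mul_zero'
  mul_assoc := mul_assoc'
  one_mul := one_mul'
  mul_one := mul_one'
  zsmul := fun n a => n • a
  zsmul_zero' := zero_zsmul
  zsmul_succ' := SubNegMonoid.zsmul_succ'
  zsmul_neg' := SubNegMonoid.zsmul_neg'
  neg_add_cancel := neg_add_cancel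
  sub_eq_add_neg := sub_eq_add_neg
  nsmul := fun n a => n • a
  nsmul_zero := zero_nsmul
  nsmul_succ := AddMonoid.nsmul_succ

instance : IsScalarTower ℂ WF WF := ⟨smul_mul'⟩
instance : SMulCommClass ℂ WF WF := ⟨fun c a b => (mul_smul' c a b).symm⟩

/-- `sh x` as an additive map. -/
def shHom (x : Gen) : WF →+ WF where
  toFun := sh x
  map_zero' := rfl
  map_add' _ _ := rfl

lemma sh_sum {ι : Type*} (x : Gen) (s : Finset ι) (f : ι → WF) :
    sh x (∑ i ∈ s, f i) = ∑ i ∈ s, sh x (f i) := map_sum (shHom x) f s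

lemma sum_apply {ι : Type*} (s : Finset ι) (f : ι → WF) (w : List Gen) :
    (∑ i ∈ s, f i) w = ∑ i ∈ s, f i w :=
  Finset.sum_apply w s (fun i => (f i : List Gen → ℂ))

/-! The iterated coproduct, as seen on a product of functionals. -/

lemma sh_K0_prod {N : ℕ} (φ : Fin N → WF) :
    sh .K0 (List.ofFn φ).prod = (List.ofFn fun i => sh .K0 (φ i)).prod := by
  induction N with
  | zero => simp
  | succ N ih => simp [List.ofFn_succ, ih]

lemma sh_K1_prod {N : ℕ} (φ : Fin N → WF) :
    sh .K1 (List.ofFn φ).prod = (List.ofFn fun i => sh .K1 (φ i)).prod := by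
  induction N with
  | zero => simp
  | succ N ih => simp [List.ofFn_succ, ih]

lemma sh_E0_prod {N : ℕ} (φ : Fin N → WF) :
    sh .E0 (List.ofFn φ).prod = ∑ k : Fin N, (List.ofFn fun i =>
      if i < k then sh .K0 (φ i) else if i = k then sh .E0 (φ i) else φ i).prod := by
  induction N with
  | zero => simp
  | succ N ih =>
    rw [List.ofFn_succ, List.prod_cons, sh_E0_mul, ih, Fin.sum_univ_succ, Finset.mul_sum, add_comm]
    simp [List.ofFn_succ, Fin.succ_ne_zero]

lemma sh_E1p_prod {N : ℕ} (φ : Fin N → WF) :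
    sh .E1p (List.ofFn φ).prod = ∑ k : Fin N, (List.ofFn fun i =>
      if i < k then sh .K1 (φ i) else if i = k then sh .E1p (φ i) else φ i).prod := by
  induction N with
  | zero => simp
  | succ N ih =>
    rw [List.ofFn_succ, List.prod_cons, sh_E1p_mul, ih, Fin.sum_univ_succ, Finset.mul_sum,
      add_comm]
    simp [List.ofFn_succ, Fin.succ_ne_zero]

lemma sh_E1m_prod {N : ℕ} (φ : Fin N → WF) :
    sh .E1m (List.ofFn φ).prod = ∑ k : Fin N, (List.ofFn fun i =>
      if i < k then φ i else if i = k then sh .E1m (φ i) else sh .K0 (φ i)).prod := by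
  induction N with
  | zero => simp
  | succ N ih =>
    rw [List.ofFn_succ, List.prod_cons, sh_E1m_mul, ih, Fin.sum_univ_succ, Finset.mul_sum,
      add_comm, sh_K0_prod]
    simp [List.ofFn_succ, Fin.succ_ne_zero]

end WF

open WF

/-! ### Matrix coefficients of evaluation modules -/

/-- The coefficient of `vⱼ` in `w v₀`, for a word `w` acting on `V(ℓ,a)`, in recursive form. The
recursion makes sense for all natural `j`; the factor `[ℓ-j]` vanishes at `j = ℓ`, so that the
indices `j ≤ ℓ` do not interact with the others, and `[j]` vanishes at `j = 0`, so that the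
truncated `j - 1` does no harm. -/
def coefAux (q a : ℂ) (ℓ : ℕ) : List Gen → ℕ → ℂ
  | [], j => if j = 0 then 1 else 0
  | .K0 :: w, j => q ^ (2 * (j : ℤ) - ℓ) * coefAux q a ℓ w j
  | .K1 :: w, j => q ^ ((ℓ : ℤ) - 2 * j) * coefAux q a ℓ w j
  | .E0 :: w, j => a * q * qnum q j * coefAux q a ℓ w (j - 1)
  | .E1p :: w, j => qnum q ((ℓ : ℤ) - j) * coefAux q a ℓ w (j + 1)
  | .E1m :: w, j => qnum q j * coefAux q a ℓ w (j - 1)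

/-- The matrix coefficient `w ↦ (coefficient of vⱼ in w v₀)` of `V(ℓ,a)`. -/
def coef (q a : ℂ) (ℓ j : ℕ) : WF := fun w => coefAux q a ℓ w j

section coef
variable (q a : ℂ) (ℓ j : ℕ)

@[simp] lemma coef_nil : coef q a ℓ j [] = if j = 0 then 1 else 0 := rfl
@[simp] lemma sh_K0_coef : sh .K0 (coef q a ℓ j) = q ^ (2 * (j : ℤ) - ℓ) • coef q a ℓ j := rfl
@[simp] lemma sh_K1_coef : sh .K1 (coef q a ℓ j) = q ^ ((ℓ : ℤ) - 2 * j) • coef q a ℓ j := rfl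
@[simp] lemma sh_E0_coef :
    sh .E0 (coef q a ℓ j) = (a * q * qnum q j) • coef q a ℓ (j - 1) := rfl
@[simp] lemma sh_E1p_coef :
    sh .E1p (coef q a ℓ j) = qnum q ((ℓ : ℤ) - j) • coef q a ℓ (j + 1) := rfl
@[simp] lemma sh_E1m_coef : sh .E1m (coef q a ℓ j) = qnum q j • coef q a ℓ (j - 1) := rfl

end coef

@[simp] lemma qnum_zero (q : ℂ) : qnum q 0 = 0 := by simp [qnum]

lemma qnum_one {q : ℂ} (h : q - q⁻¹ ≠ 0) : qnum q 1 = 1 := by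
  simp [qnum, div_self h]

lemma qnum_succ {q : ℂ} (hq : q ≠ 0) (h : q - q⁻¹ ≠ 0) (t : ℤ) :
    qnum q (t + 1) = q * qnum q t + q ^ (-t) := by
  unfold qnum
  rw [← mul_div_assoc, div_add' _ _ _ h, neg_add, zpow_add₀ hq, zpow_add₀ hq]
  congr 1
  simp only [zpow_one, zpow_neg]
  ring

lemma qnum_succ' {q : ℂ} (hq : q ≠ 0) (h : q - q⁻¹ ≠ 0) (t : ℤ) :
    qnum q (t + 1) = q⁻¹ * qnum q t + q ^ t := by
  unfold qnum
  rw [← mul_div_assoc, div_add' _ _ _ h, neg_add, zpow_add₀ hq, zpow_add₀ hq]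
  congr 1
  simp only [zpow_one, zpow_neg]
  ring

lemma coef_zero_zero (q a : ℂ) : coef q a 0 0 = 1 := by
  funext w
  induction w with
  | nil => simp
  | cons x w ih => cases x <;> simp only [cons_apply] <;> simp [ih]

/-- The embedding `vᵢ ↦ v₀ ⊗ vᵢ + q^(i-1-ℓ) v₁ ⊗ vᵢ₋₁` of `V(ℓ+1, a)` into
`V(1, a q^(-ℓ)) ⊗ V(ℓ, a q)`, expressed through matrix coefficients; here `a = b q^ℓ`. -/
lemma fusion {q : ℂ} (hq : q ≠ 0) (h : q - q⁻¹ ≠ 0) (b : ℂ) (ℓ i : ℕ) (w : List Gen) :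
    (coef q b 1 0 * coef q (b * q ^ (ℓ + 1)) ℓ i) w = coef q (b * q ^ ℓ) (ℓ + 1) i w ∧
    (coef q b 1 1 * coef q (b * q ^ (ℓ + 1)) ℓ i) w
      = q ^ ((i : ℤ) - ℓ) * coef q (b * q ^ ℓ) (ℓ + 1) (i + 1) w := by
  induction w generalizing i with
  | nil => simp
  | cons x w ih =>
    have e0 := fun i => (ih i).1
    have e1 := fun i => (ih i).2
    cases x <;> simp only [cons_apply] <;> simp [e0, e1, qnum_one h, smul_mul_assoc, mul_smul_comm]
    case K0 =>
      constructor
      · rw [sub_add_eq_sub_sub, zpow_sub_one₀ hq]; ring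
      · rw [show 2 * ((i : ℤ) + 1) - (ℓ + 1) = 2 * i - ℓ + 1 by ring, zpow_add_one₀ hq]; ring
    case K1 =>
      constructor
      · rw [add_sub_right_comm, zpow_add_one₀ hq]; ring
      · rw [show (ℓ : ℤ) + 1 - 2 * (i + 1) = ℓ - 2 * i - 1 by ring, zpow_sub_one₀ hq]; ring
    case E0 =>
      constructor
      · field_simp; ring
      · cases i with
        | zero => simp [qnum_one h]; field_simp
        | succ i =>
          simp only [add_tsub_cancel_right, qnum_succ hq h (((i + 1 : ℕ) : ℤ))]
          have e : q ^ (((i + 1 : ℕ) : ℤ) - ℓ) = q * q ^ ((i : ℤ) - ℓ) := by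
            rw [← zpow_one_add₀ hq]; congr 1; push_cast; ring
          have e' : q ^ (-((i + 1 : ℕ) : ℤ)) = (q * q ^ ((i : ℤ) - ℓ) * q ^ ℓ)⁻¹ := by
            rw [← zpow_one_add₀ hq, ← zpow_natCast, ← zpow_add₀ hq, ← zpow_neg]
            congr 1; push_cast; ring
          have : q ^ ((i : ℤ) - ℓ) ≠ 0 := zpow_ne_zero _ hq
          rw [e, e']
          field_simp
          ring
    case E1p =>
      constructor
      · rw [add_sub_right_comm, qnum_succ hq h, neg_sub]; ring
      · rw [add_sub_right_comm, zpow_add_one₀ hq]; field_simp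
    case E1m =>
      cases i with
      | zero => simp [qnum_one h]
      | succ i =>
        simp only [add_tsub_cancel_right, qnum_succ' hq h (((i + 1 : ℕ) : ℤ))]
        have e : q ^ (((i + 1 : ℕ) : ℤ) - ℓ) = q * q ^ ((i : ℤ) - ℓ) := by
          rw [← zpow_one_add₀ hq]; congr 1; push_cast; ring
        have e' : q ^ (2 * ((i + 1 : ℕ) : ℤ) - ℓ) =
            q ^ ((i + 1 : ℕ) : ℤ) * (q * q ^ ((i : ℤ) - ℓ)) := by
          rw [← zpow_one_add₀ hq, ← zpow_add₀ hq]; congr 1; push_cast; ring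
        rw [e, e']
        field_simp

/-- The product of the coefficients of `V(1,a)` and `V(1,b)` does not depend on their order. The
four linear combinations in the statement are those preserved by the `R`-matrix. -/
lemma coef_one_comm_aux {q : ℂ} (hq : q ≠ 0) (h : q - q⁻¹ ≠ 0) (a b : ℂ) (w : List Gen) :
    (coef q a 1 0 * coef q b 1 0) w = (coef q b 1 0 * coef q a 1 0) w ∧
    (coef q a 1 1 * coef q b 1 1) w = (coef q b 1 1 * coef q a 1 1) w ∧
    q * (coef q a 1 0 * coef q b 1 1) w + (coef q a 1 1 * coef q b 1 0) w =
      q * (coef q b 1 0 * coef q a 1 1) w + (coef q b 1 1 * coef q a 1 0) w ∧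
    a * (coef q a 1 0 * coef q b 1 1) w + b * q * (coef q a 1 1 * coef q b 1 0) w =
      b * (coef q b 1 0 * coef q a 1 1) w + a * q * (coef q b 1 1 * coef q a 1 0) w := by
  induction w with
  | nil => simp
  | cons x w ih =>
    obtain ⟨h1, h2, h3, h4⟩ := ih
    cases x <;> simp only [cons_apply] <;> simp [h1, h2, qnum_one h, smul_mul_assoc, mul_smul_comm]
    all_goals grind

lemma coef_one_comm {q : ℂ} (hq : q ≠ 0) (h : q - q⁻¹ ≠ 0) (a b : ℂ) :
    Commute (coef q a 1 0) (coef q b 1 0) :=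
  funext fun w => (coef_one_comm_aux hq h a b w).1

/-! ### Strings and the multiset attached to a product -/

/-- The list `b, bq², …, bq^(2ℓ-2)`: the `q`-string of length `ℓ` starting at `b`. -/
def strL (q : ℂ) : ℕ → ℂ → List ℂ
  | 0, _ => []
  | ℓ + 1, b => b :: strL q ℓ (b * q ^ 2)

/-- The fused form of the coefficient of `V(ℓ,a)`, where `a = b q^(ℓ-1)`. -/
lemma coef_eq_prod {q : ℂ} (hq : q ≠ 0) (h : q - q⁻¹ ≠ 0) (ℓ : ℕ) (b : ℂ) :
    coef q (b * q ^ ((ℓ : ℤ) - 1)) ℓ 0 = ((strL q ℓ b).map fun c => coef q c 1 0).prod := by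
  induction ℓ generalizing b with
  | zero => simp [strL, coef_zero_zero]
  | succ ℓ ih =>
    rw [strL, List.map_cons, List.prod_cons, ← ih]
    have e : b * q ^ 2 * q ^ ((ℓ : ℤ) - 1) = b * q ^ (ℓ + 1) := by
      rw [mul_assoc, ← zpow_natCast, ← zpow_add₀ hq, ← zpow_natCast]
      congr 2; push_cast; ring
    have e' : q ^ (((ℓ + 1 : ℕ) : ℤ) - 1) = q ^ ℓ := by
      rw [← zpow_natCast]; congr 1; push_cast; ring
    rw [e, e']
    exact funext fun w => ((fusion hq h b ℓ 0 w).1).symm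

lemma prod_perm {q : ℂ} (hq : q ≠ 0) (h : q - q⁻¹ ≠ 0) {L L' : List ℂ} (hL : L.Perm L') :
    (L.map fun c => coef q c 1 0).prod = (L'.map fun c => coef q c 1 0).prod := by
  refine (hL.map _).prod_eq' ?_
  rw [List.pairwise_map]
  exact List.pairwise_of_forall fun a b => coef_one_comm hq h a b

/-- The functional `w ↦ ψ ((E₁⁺)ᵏ w)`. -/
def shPow (k : ℕ) (ψ : WF) : WF := fun w => ψ (List.replicate k .E1p ++ w)

section recover
variable {q : ℂ} (hq : q ≠ 0) (h : q - q⁻¹ ≠ 0) (b : ℂ)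

lemma coef0_mul_E0 (ψ : WF) (k : ℕ) :
    (coef q b 1 0 * ψ) (List.replicate k .E0) = q⁻¹ ^ k * ψ (List.replicate k .E0) := by
  induction k generalizing ψ with
  | zero => simp
  | succ k ih =>
    simp only [List.replicate_succ, cons_apply]
    simp [smul_mul_assoc, ih]
    ring

include hq h

lemma coef1_mul_E0 (ψ : WF) (k : ℕ) :
    (coef q b 1 1 * ψ) (List.replicate (k + 1) .E0) =
      b * q * qnum q (k + 1) * ψ (List.replicate k .E0) := by
  induction k generalizing ψ with
  | zero =>
    simp only [List.replicate_succ, cons_apply]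
    simp [smul_mul_assoc, qnum_one h]
  | succ k ih =>
    simp only [List.replicate_succ (n := k + 1), cons_apply]
    simp only [sh_E0_mul, add_apply, sh_K0_coef, sh_E0_coef, smul_mul_assoc, smul_apply, ih,
      tsub_self, coef0_mul_E0]
    rw [show ((k + 1 : ℕ) : ℤ) + 1 = ((k : ℤ) + 1) + 1 by push_cast; ring, qnum_succ hq h (k + 1)]
    simp only [List.replicate_succ, cons_apply]
    have e : q ^ (-((k : ℤ) + 1)) = q⁻¹ ^ (k + 1) := by
      rw [inv_pow, zpow_neg]; norm_cast
    rw [e]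
    simp [qnum_one h]
    ring

omit h in
lemma coef1_mul_E1p (ψ : WF) (k : ℕ) (u : List Gen) :
    (coef q b 1 1 * ψ) (List.replicate k .E1p ++ u) =
      q⁻¹ ^ k * (coef q b 1 1 * shPow k ψ) u := by
  induction k generalizing ψ with
  | zero => simp; rfl
  | succ k ih =>
    simp only [List.replicate_succ, List.cons_append, cons_apply]
    simp [smul_mul_assoc, ih]
    change q⁻¹ * ((q ^ k)⁻¹ * (coef q b 1 1 * shPow (k + 1) ψ) u) = _
    field_simp
    ring

lemma coef0_mul_E1p (ψ : WF) (k : ℕ) (u : List Gen) :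
    (coef q b 1 0 * ψ) (List.replicate (k + 1) .E1p ++ u) =
      q ^ (k + 1) * (coef q b 1 0 * shPow (k + 1) ψ) u +
        qnum q (k + 1) * (coef q b 1 1 * shPow k ψ) u := by
  induction k generalizing ψ with
  | zero =>
    simp only [List.replicate_succ, List.cons_append, cons_apply]
    simp [smul_mul_assoc, qnum_one h]
    rfl
  | succ k ih =>
    simp only [List.replicate_succ (n := k + 1), List.cons_append, cons_apply]
    simp only [sh_E1p_mul, add_apply, sh_K1_coef, sh_E1p_coef, smul_mul_assoc, smul_apply, ih,
      coef1_mul_E1p hq, zero_add]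
    rw [show ((k + 1 : ℕ) : ℤ) + 1 = ((k : ℤ) + 1) + 1 by push_cast; ring, qnum_succ hq h (k + 1)]
    have e1 : shPow (k + 1) (sh .E1p ψ) = shPow (k + 1 + 1) ψ := rfl
    have e2 : shPow k (sh .E1p ψ) = shPow (k + 1) ψ := rfl
    rw [e1, e2]
    have e : q ^ (-((k : ℤ) + 1)) = q⁻¹ ^ (k + 1) := by
      rw [inv_pow, zpow_neg]; norm_cast
    rw [e]
    simp [qnum_one h]
    ring

/-- The recursion for the values on the words `(E₁⁺)ⁱ(E₀⁺)ⁱ`. -/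
lemma coef0_mul_word (ψ : WF) (i : ℕ) :
    (coef q b 1 0 * ψ) (List.replicate (i + 1) .E1p ++ List.replicate (i + 1) .E0) =
      ψ (List.replicate (i + 1) .E1p ++ List.replicate (i + 1) .E0) +
        b * q * qnum q (i + 1) ^ 2 * ψ (List.replicate i .E1p ++ List.replicate i .E0) := by
  rw [coef0_mul_E1p hq h, coef0_mul_E0, coef1_mul_E0 hq h, ← mul_assoc, ← mul_pow,
    mul_inv_cancel₀ hq, one_pow, one_mul]
  simp only [shPow]
  ring

omit hq h in
lemma esymm_cons (s : Multiset ℂ) (i : ℕ) :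
    (b ::ₘ s).esymm (i + 1) = s.esymm (i + 1) + b * s.esymm i := by
  simp only [Multiset.esymm, Multiset.powersetCard_cons, Multiset.map_add, Multiset.sum_add,
    Multiset.map_map, Function.comp_def, Multiset.prod_cons, Multiset.sum_map_mul_left]

omit hq h in
lemma prod_nil_apply (L : List ℂ) : (L.map fun c => coef q c 1 0).prod [] = 1 := by
  induction L with
  | nil => simp
  | cons c L ih => simp [ih]

omit hq h in
lemma prod_K1_apply (L : List ℂ) : (L.map fun c => coef q c 1 0).prod [.K1] = q ^ L.length := by
  induction L with
  | nil => simp [cons_apply]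
  | cons c L ih =>
    simp only [cons_apply] at ih ⊢
    simp [ih, pow_succ']

/-- The values of a product on the words `(E₁⁺)ⁱ(E₀⁺)ⁱ` are, up to nonzero factors, the elementary
symmetric functions of the parameters. -/
lemma prod_word (L : List ℂ) (i : ℕ) :
    (L.map fun c => coef q c 1 0).prod (List.replicate i .E1p ++ List.replicate i .E0) =
      q ^ i * qfac q i ^ 2 * (L : Multiset ℂ).esymm i := by
  induction L generalizing i with
  | nil =>
    cases i with
    | zero => simp [qfac, Multiset.esymm]
    | succ i =>
      simp only [List.replicate_succ, List.cons_append, cons_apply]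
      simp [Multiset.esymm, Multiset.powersetCard_zero_right]
  | cons b L ih =>
    cases i with
    | zero => simpa [qfac, Multiset.esymm] using prod_nil_apply (q := q) (b :: L)
    | succ i =>
      rw [List.map_cons, List.prod_cons, coef0_mul_word hq h, ih, ih, ← Multiset.cons_coe,
        esymm_cons, show qfac q (i + 1) = qfac q i * qnum q (i + 1) from
          Finset.prod_range_succ _ _]
      ring

end recover

/-- `[k+1] ≠ 0`, as `q` is not a root of unity. -/
lemma qnum_ne_zero {q : ℂ} (hq0 : q ≠ 0) (hq : ∀ n : ℕ, 0 < n → q ^ n ≠ 1) (k : ℕ) :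
    qnum q ((k : ℤ) + 1) ≠ 0 := by
  have h2 := hq (2 * (k + 1)) (by omega)
  have h : q - q⁻¹ ≠ 0 := by
    intro h
    apply hq 2 (by norm_num)
    field_simp at h
    linear_combination h
  refine div_ne_zero ?_ h
  intro h3
  apply h2
  rw [sub_eq_zero] at h3
  rw [two_mul, pow_add]
  have h4 : q ^ ((k : ℤ) + 1) = q ^ (k + 1) := by norm_cast
  rw [zpow_neg, h4] at h3
  nth_rw 1 [h3]
  exact inv_mul_cancel₀ (pow_ne_zero _ hq0)

lemma pow_inj {q : ℂ} (hq0 : q ≠ 0) (hq : ∀ n : ℕ, 0 < n → q ^ n ≠ 1) {a b : ℕ}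
    (h : q ^ a = q ^ b) : a = b := by
  by_contra hne
  wlog hab : a < b generalizing a b
  · exact this h.symm (Ne.symm hne) (by omega)
  obtain ⟨k, rfl⟩ := Nat.exists_eq_add_of_lt hab
  apply hq (k + 1) (by omega)
  rw [add_assoc, pow_add] at h
  exact (mul_eq_left₀ (pow_ne_zero _ hq0)).mp h.symm

/-- A product of functionals of two-dimensional evaluation modules determines the multiset of
evaluation parameters. -/
lemma prod_inj {q : ℂ} (hq0 : q ≠ 0) (hq : ∀ n : ℕ, 0 < n → q ^ n ≠ 1) (h : q - q⁻¹ ≠ 0)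
    {L L' : List ℂ}
    (hL : (L.map fun c => coef q c 1 0).prod = (L'.map fun c => coef q c 1 0).prod) :
    (L : Multiset ℂ) = L' := by
  have hc : L.length = L'.length := by
    have := congrFun hL [.K1]
    rw [prod_K1_apply, prod_K1_apply] at this
    exact pow_inj hq0 hq this
  have hs : ∀ i, (L : Multiset ℂ).esymm i = (L' : Multiset ℂ).esymm i := by
    intro i
    have := congrFun hL (List.replicate i .E1p ++ List.replicate i .E0)
    rw [prod_word hq0 h, prod_word hq0 h] at this
    refine mul_left_cancel₀ (mul_ne_zero (pow_ne_zero _ hq0) (pow_ne_zero _ ?_)) this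
    exact Finset.prod_ne_zero_iff.mpr fun k _ => qnum_ne_zero hq0 hq k
  have hp := Multiset.prod_X_sub_X_eq_sum_esymm (L : Multiset ℂ)
  have hp' := Multiset.prod_X_sub_X_eq_sum_esymm (L' : Multiset ℂ)
  simp only [hs, Multiset.coe_card, hc] at hp hp'
  rw [← hp'] at hp
  rw [← Polynomial.roots_multiset_prod_X_sub_C (L : Multiset ℂ), hp,
    Polynomial.roots_multiset_prod_X_sub_C]

/-! ### Uniqueness of minimal decompositions into strings -/

lemma strL_add (q : ℂ) (m n : ℕ) (b : ℂ) :
    strL q (m + n) b = strL q m b ++ strL q n (b * q ^ (2 * m)) := by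
  induction m generalizing b with
  | zero => simp [strL]
  | succ m ih =>
    rw [show m + 1 + n = (m + n) + 1 by ring, strL, ih, strL, List.cons_append]
    congr 3
    ring

lemma mem_strL {q : ℂ} {ℓ : ℕ} {b c : ℂ} :
    c ∈ strL q ℓ b ↔ ∃ k < ℓ, c = b * q ^ (2 * k) := by
  induction ℓ generalizing b with
  | zero => simp [strL]
  | succ ℓ ih =>
    rw [strL, List.mem_cons, ih]
    constructor
    · rintro (rfl | ⟨k, hk, rfl⟩)
      · exact ⟨0, by omega, by simp⟩
      · exact ⟨k + 1, by omega, by ring⟩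
    · rintro ⟨k, hk, rfl⟩
      cases k with
      | zero => left; simp
      | succ k => exact Or.inr ⟨k, by omega, by ring⟩

lemma length_strL (q : ℂ) (ℓ : ℕ) (b : ℂ) : (strL q ℓ b).length = ℓ := by
  induction ℓ generalizing b with
  | zero => rfl
  | succ ℓ ih => simp [strL, ih]

/-- The string of length `p.1` starting at `p.2`, as a multiset. -/
def strM (q : ℂ) (p : ℕ × ℂ) : Multiset ℂ := strL q p.1 p.2

/-- The union, with multiplicities, of a family of strings. -/
def strs (q : ℂ) (F : Multiset (ℕ × ℂ)) : Multiset ℂ := F.bind (strM q)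

/-- The dimension `∏ (ℓᵢ + 1)` of the tensor product attached to a family of strings. -/
def fdim (F : Multiset (ℕ × ℂ)) : ℕ := (F.map fun p => p.1 + 1).prod

/-- The family has the smallest `fdim` among all families of strings with the same union. -/
def MinStr (q : ℂ) (F : Multiset (ℕ × ℂ)) : Prop :=
  ∀ F' : Multiset (ℕ × ℂ), strs q F' = strs q F → fdim F ≤ fdim F'

@[simp] lemma strs_zero (q : ℂ) : strs q 0 = 0 := rfl
@[simp] lemma strs_cons (q : ℂ) (p : ℕ × ℂ) (F : Multiset (ℕ × ℂ)) :
    strs q (p ::ₘ F) = strM q p + strs q F := Multiset.cons_bind _ _ _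
@[simp] lemma fdim_cons (p : ℕ × ℂ) (F : Multiset (ℕ × ℂ)) :
    fdim (p ::ₘ F) = (p.1 + 1) * fdim F := by simp [fdim]

lemma fdim_pos (F : Multiset (ℕ × ℂ)) : 0 < fdim F := by
  refine Multiset.prod_pos fun a ha => ?_
  obtain ⟨p, _, rfl⟩ := Multiset.mem_map.mp ha
  exact p.1.succ_pos

lemma mem_strM {q : ℂ} {p : ℕ × ℂ} {c : ℂ} :
    c ∈ strM q p ↔ ∃ k < p.1, c = p.2 * q ^ (2 * k) := by
  rw [strM, Multiset.mem_coe, mem_strL]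

lemma mem_strs {q : ℂ} {F : Multiset (ℕ × ℂ)} {c : ℂ} :
    c ∈ strs q F ↔ ∃ p ∈ F, ∃ k < p.1, c = p.2 * q ^ (2 * k) := by
  simp only [strs, Multiset.mem_bind, mem_strM]

lemma MinStr.of_cons {q : ℂ} {p : ℕ × ℂ} {F : Multiset (ℕ × ℂ)} (h : MinStr q (p ::ₘ F)) :
    MinStr q F := by
  intro F' hF'
  have := h (p ::ₘ F') (by simp [hF'])
  rw [fdim_cons, fdim_cons] at this
  exact Nat.le_of_mul_le_mul_left this (by omega)

/-- A minimal family cannot contain a string `A ∪ C` and a string `C ∪ B`, where `A`, `C`, `B` are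
consecutive of lengths `m`, `k`, `r` with `m, r ≥ 1` (and possibly `k = 0`): replacing the two by
`A ∪ C ∪ B` and `C` would decrease the product of the two dimensions by `m r`. -/
lemma MinStr.general_position {q : ℂ} {F : Multiset (ℕ × ℂ)} {m k r : ℕ} {b : ℂ}
    (hm : 1 ≤ m) (hr : 1 ≤ r)
    (h : MinStr q ((m + k, b) ::ₘ (k + r, b * q ^ (2 * m)) ::ₘ F)) : False := by
  have h1 := h ((m + k + r, b) ::ₘ (k, b * q ^ (2 * m)) ::ₘ F) ?_
  · simp only [fdim_cons, ← mul_assoc] at h1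
    have h2 := Nat.le_of_mul_le_mul_right h1 (fdim_pos F)
    have : 0 < m * r := by positivity
    nlinarith
  · simp only [strs_cons, strM, strL_add, ← Multiset.coe_add, mul_assoc, ← pow_add, mul_add]
    abel

/-- If all elements of the string of length `ℓ` starting at `b` occur in a minimal family `G`, then
each initial segment of this string is contained in a single member of `G`. -/
lemma MinStr.cover {q : ℂ} (hq0 : q ≠ 0) (hq : ∀ n : ℕ, 0 < n → q ^ n ≠ 1)
    {G : Multiset (ℕ × ℂ)} (hG : MinStr q G) (hne : ∀ p ∈ G, p.2 ≠ 0) {ℓ : ℕ} {b : ℂ}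
    (hsub : ∀ x ∈ strM q (ℓ, b), x ∈ strs q G) (e : ℕ) (he : 1 ≤ e) (heℓ : e ≤ ℓ) :
    ∃ T ∈ G, ∃ k, b = T.2 * q ^ (2 * k) ∧ k + e ≤ T.1 := by
  induction e, he using Nat.le_induction with
  | base =>
    obtain ⟨T, hT, k, hk, hb⟩ := mem_strs.mp (hsub b (mem_strM.mpr ⟨0, heℓ, by simp⟩))
    exact ⟨T, hT, k, hb, by omega⟩
  | succ e he ih =>
    obtain ⟨⟨ℓ', b'⟩, hT, k0, hb, hk0⟩ := ih (by omega)
    dsimp only at hb hk0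
    by_cases hlt : k0 + (e + 1) ≤ ℓ'
    · exact ⟨_, hT, k0, hb, hlt⟩
    obtain ⟨⟨ℓ'', b''⟩, hT', k1, hk1, hb'⟩ :=
      mem_strs.mp (hsub (b * q ^ (2 * e)) (mem_strM.mpr ⟨e, heℓ, rfl⟩))
    dsimp only at hb' hk1
    have hqn : ∀ n, q ^ n ≠ 0 := fun n => pow_ne_zero n hq0
    by_cases hke : e ≤ k1
    · refine ⟨_, hT', k1 - e, ?_, by dsimp only; omega⟩
      obtain ⟨d, rfl⟩ := Nat.exists_eq_add_of_le hke
      apply mul_right_cancel₀ (hqn (2 * e))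
      rw [hb', mul_assoc, ← pow_add]
      congr 2
      omega
    exfalso
    obtain ⟨m, hm⟩ : ∃ m, k0 + e = m + k1 := ⟨k0 + e - k1, by omega⟩
    obtain ⟨r, rfl⟩ : ∃ r, ℓ'' = k1 + r := ⟨ℓ'' - k1, by omega⟩
    obtain rfl : ℓ' = m + k1 := by omega
    have hb'' : b'' = b' * q ^ (2 * m) := by
      apply mul_right_cancel₀ (hqn (2 * k1))
      rw [← hb', hb, mul_assoc, mul_assoc, ← pow_add, ← pow_add]
      congr 2
      omega
    subst hb''
    have hne' : (k1 + r, b' * q ^ (2 * m)) ≠ (m + k1, b') := by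
      intro h
      have h2 := (Prod.ext_iff.mp h).2
      exact hq (2 * m) (by omega) ((mul_eq_left₀ (hne _ hT)).mp h2)
    obtain ⟨G1, rfl⟩ := Multiset.exists_cons_of_mem hT
    obtain ⟨G2, rfl⟩ := Multiset.exists_cons_of_mem
      ((Multiset.mem_cons.mp hT').resolve_left hne')
    exact hG.general_position (by omega) (by omega)

/-- A string whose elements all occur in a minimal family, and which is at least as long as all
members of the family, is itself a member. -/
lemma MinStr.mem_of_longest {q : ℂ} (hq0 : q ≠ 0) (hq : ∀ n : ℕ, 0 < n → q ^ n ≠ 1)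
    {G : Multiset (ℕ × ℂ)} (hG : MinStr q G) (hne : ∀ p ∈ G, p.2 ≠ 0) {p : ℕ × ℂ}
    (hp : 1 ≤ p.1) (hsub : ∀ x ∈ strM q p, x ∈ strs q G) (hmax : ∀ T ∈ G, T.1 ≤ p.1) :
    p ∈ G := by
  obtain ⟨T, hT, k, hb, hk⟩ := hG.cover hq0 hq hne (ℓ := p.1) (b := p.2) hsub p.1 hp le_rfl
  have := hmax T hT
  obtain rfl : k = 0 := by omega
  have : T = p := Prod.ext (by omega) (by simpa using hb.symm)
  exact this ▸ hT

/-- A minimal family of strings is determined by its union. -/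
theorem MinStr.unique {q : ℂ} (hq0 : q ≠ 0) (hq : ∀ n : ℕ, 0 < n → q ^ n ≠ 1)
    {F G : Multiset (ℕ × ℂ)} (hF : MinStr q F) (hG : MinStr q G)
    (hF0 : ∀ p ∈ F, 1 ≤ p.1 ∧ p.2 ≠ 0) (hG0 : ∀ p ∈ G, 1 ≤ p.1 ∧ p.2 ≠ 0)
    (h : strs q F = strs q G) : F = G := by
  induction hn : Multiset.card F + Multiset.card G using Nat.strong_induction_on
    generalizing F G with
  | _ n ih =>
  by_cases hne : F + G = 0
  · rw [add_eq_zero] at hne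
    rw [hne.1, hne.2]
  obtain ⟨p, hp, hmax⟩ : ∃ p ∈ F + G, ∀ T ∈ F + G, T.1 ≤ p.1 := by
    obtain ⟨p, hp, hm⟩ := Finset.exists_max_image (F + G).toFinset (fun p => p.1)
      (by simpa [Finset.nonempty_iff_ne_empty] using hne)
    exact ⟨p, by simpa using hp, fun T hT => hm T (by simpa using hT)⟩
  have hmem : ∀ {A B : Multiset (ℕ × ℂ)}, MinStr q B → (∀ p ∈ A, 1 ≤ p.1 ∧ p.2 ≠ 0) →
      (∀ p ∈ B, 1 ≤ p.1 ∧ p.2 ≠ 0) → strs q A = strs q B → (∀ T ∈ B, T.1 ≤ p.1) → p ∈ A →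
      p ∈ B := by
    intro A B hB hA0 hB0 hAB hmB hpA
    refine hB.mem_of_longest hq0 hq (fun T hT => (hB0 T hT).2) (hA0 p hpA).1 ?_ hmB
    intro x hx
    rw [← hAB]
    exact Multiset.mem_bind.mpr ⟨p, hpA, hx⟩
  have hmF : ∀ T ∈ F, T.1 ≤ p.1 := fun T hT => hmax T (Multiset.mem_add.mpr (Or.inl hT))
  have hmG : ∀ T ∈ G, T.1 ≤ p.1 := fun T hT => hmax T (Multiset.mem_add.mpr (Or.inr hT))
  have hpFG : p ∈ F ∧ p ∈ G := by
    rcases Multiset.mem_add.mp hp with hp | hp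
    · exact ⟨hp, hmem hG hF0 hG0 h hmG hp⟩
    · exact ⟨hmem hF hG0 hF0 h.symm hmF hp, hp⟩
  obtain ⟨F1, rfl⟩ := Multiset.exists_cons_of_mem hpFG.1
  obtain ⟨G1, rfl⟩ := Multiset.exists_cons_of_mem hpFG.2
  rw [ih _ ?_ hF.of_cons hG.of_cons (fun T hT => hF0 T (Multiset.mem_cons_of_mem hT))
    (fun T hT => hG0 T (Multiset.mem_cons_of_mem hT)) (by simpa using h) rfl]
  rw [← hn, Multiset.card_cons, Multiset.card_cons]
  omega

/-! ### Matrix coefficients of tensor products -/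

/-- The structure operators of `V(ℓ,a)`, indexed by the generators. -/
def evG (q a : ℂ) (ℓ : ℕ) : Gen → Module.End ℂ (Fin (ℓ + 1) → ℂ)
  | .K0 => evalK0 q ℓ
  | .K1 => evalK1 q ℓ
  | .E0 => evalE0 q a ℓ
  | .E1p => evalE1p q ℓ
  | .E1m => evalE1m q ℓ

/-- The structure operators of a tensor product of evaluation modules, indexed by the
generators. -/
def tpG (q : ℂ) {N : ℕ} (ns : Fin N → ℕ) (as : Fin N → ℂ) : Gen → Module.End ℂ (TPS ns)
  | .K0 => tpK0 q ns
  | .K1 => tpK1 q ns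
  | .E0 => tpE0 q ns as
  | .E1p => tpE1p q ns
  | .E1m => tpE1m q ns

section mc
variable {V : Type*} [AddCommGroup V] [Module ℂ V]

/-- The vector `w v`, for a word `w` in the generators. -/
def act (g : Gen → Module.End ℂ V) (v : V) : List Gen → V
  | [] => v
  | x :: w => g x (act g v w)

/-- The matrix coefficient `w ↦ ξ (w v)`. -/
def mc (g : Gen → Module.End ℂ V) (ξ : Module.Dual ℂ V) (v : V) : WF := fun w => ξ (act g v w)

lemma sh_mc (x : Gen) (g : Gen → Module.End ℂ V) (ξ : Module.Dual ℂ V) (v : V) :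
    sh x (mc g ξ v) = mc g (ξ ∘ₗ g x) v := rfl

lemma mc_sum {ι : Type*} (s : Finset ι) (g : Gen → Module.End ℂ V) (ξ : ι → Module.Dual ℂ V)
    (v : V) : mc g (∑ i ∈ s, ξ i) v = ∑ i ∈ s, mc g (ξ i) v := by
  funext w
  rw [sum_apply]
  simp [mc]

end mc

lemma mc_evG (q a : ℂ) (ℓ : ℕ) (j : Fin (ℓ + 1)) :
    mc (evG q a ℓ) (LinearMap.proj j) (Pi.single 0 1) = coef q a ℓ j := by
  funext w
  induction w generalizing j with
  | nil =>
    change (Pi.single 0 1 : Fin (ℓ + 1) → ℂ) j = _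
    rw [coef_nil, Pi.single_apply]
    simp only [Fin.ext_iff, Fin.val_zero]
  | cons x w ih =>
    replace ih : ∀ j, act (evG q a ℓ) (Pi.single 0 1) w j = coef q a ℓ j w := ih
    simp only [cons_apply (coef q a ℓ j)]
    change act (evG q a ℓ) (Pi.single 0 1) (x :: w) j = _
    cases x
    case K0 => simp [act, evG, evalK0, Matrix.mulVec_diagonal, ih]
    case K1 => simp [act, evG, evalK1, Matrix.mulVec_diagonal, ih]
    case E0 =>
      simp only [act, evG, evalE0, Matrix.mulVecLin_apply, Matrix.mulVec, dotProduct, Matrix.of_apply,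
        sh_E0_coef, WF.smul_apply]
      obtain ⟨j, hj⟩ := j
      cases j with
      | zero => simp
      | succ j =>
        rw [Finset.sum_eq_single ⟨j, by omega⟩]
        · simp [ih]
        · intro i _ hi
          rw [if_neg (fun h => hi (Fin.ext (by dsimp only at h ⊢; omega))), zero_mul]
        · simp
    case E1m =>
      simp only [act, evG, evalE1m, Matrix.mulVecLin_apply, Matrix.mulVec, dotProduct,
        Matrix.of_apply, sh_E1m_coef, WF.smul_apply]
      obtain ⟨j, hj⟩ := j
      cases j with
      | zero => simp
      | succ j =>
        rw [Finset.sum_eq_single ⟨j, by omega⟩]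
        · simp [ih]
        · intro i _ hi
          rw [if_neg (fun h => hi (Fin.ext (by dsimp only at h ⊢; omega))), zero_mul]
        · simp
    case E1p =>
      simp only [act, evG, evalE1p, Matrix.mulVecLin_apply, Matrix.mulVec, dotProduct,
        Matrix.of_apply, sh_E1p_coef, WF.smul_apply]
      obtain ⟨j, hj⟩ := j
      by_cases hjl : j = ℓ
      · subst hjl
        rw [sub_self, qnum_zero, zero_mul]
        refine Finset.sum_eq_zero fun i _ => ?_
        rw [if_neg (by have := i.2; simp only; omega), zero_mul]
      · rw [Finset.sum_eq_single ⟨j + 1, by omega⟩]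
        · rw [if_pos rfl, ih, show (ℓ : ℤ) - ((j + 1 : ℕ) : ℤ) + 1 = ℓ - j by push_cast; ring]
        · intro i _ hi
          rw [if_neg (fun h => hi (Fin.ext h)), zero_mul]
        · simp

section tensor
variable {N : ℕ} {ns : Fin N → ℕ}

/-- The product functional `ξ₁ ⊗ ⋯ ⊗ ξ_N`. -/
def tdual (ξ : ∀ i, Module.Dual ℂ (Fin (ns i + 1) → ℂ)) : Module.Dual ℂ (TPS ns) :=
  PiTensorProduct.dualDistrib (PiTensorProduct.tprod ℂ ξ)

@[simp] lemma tdual_tprod (ξ : ∀ i, Module.Dual ℂ (Fin (ns i + 1) → ℂ))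
    (x : ∀ i, Fin (ns i + 1) → ℂ) :
    tdual ξ (PiTensorProduct.tprod ℂ x) = ∏ i, ξ i (x i) :=
  PiTensorProduct.dualDistrib_apply _ _

lemma tdual_map (ξ : ∀ i, Module.Dual ℂ (Fin (ns i + 1) → ℂ))
    (f : ∀ i, Module.End ℂ (Fin (ns i + 1) → ℂ)) :
    tdual ξ ∘ₗ PiTensorProduct.map f = tdual fun i => ξ i ∘ₗ f i := by
  ext x
  simp

lemma tdual_comp_sum (ξ : ∀ i, Module.Dual ℂ (Fin (ns i + 1) → ℂ))
    (f : Fin N → ∀ i, Module.End ℂ (Fin (ns i + 1) → ℂ)) :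
    tdual ξ ∘ₗ ∑ k, PiTensorProduct.map (f k) = ∑ k, tdual fun i => ξ i ∘ₗ f k i := by
  ext x
  simp

lemma tdual_smul (c : Fin N → ℂ) (ξ : ∀ i, Module.Dual ℂ (Fin (ns i + 1) → ℂ)) :
    (tdual fun i => c i • ξ i) = (∏ i, c i) • tdual ξ := by
  ext x
  simp [Finset.prod_mul_distrib]

/-- Matrix coefficients of a tensor product are convolution products. -/
lemma mc_tpG (q : ℂ) (as : Fin N → ℂ) (ξ : ∀ i, Module.Dual ℂ (Fin (ns i + 1) → ℂ))
    (x : ∀ i, Fin (ns i + 1) → ℂ) :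
    mc (tpG q ns as) (tdual ξ) (PiTensorProduct.tprod ℂ x) =
      (List.ofFn fun i => mc (evG q (as i) (ns i)) (ξ i) (x i)).prod := by
  funext w
  induction w generalizing ξ with
  | nil =>
    have : ∀ {n : ℕ} (φ : Fin n → WF), (List.ofFn φ).prod [] = ∏ i, φ i [] := by
      intro n φ
      induction n with
      | zero => simp
      | succ n ih => simp [List.ofFn_succ, Fin.prod_univ_succ, ih]
    rw [this]
    exact tdual_tprod ξ x
  | cons y w ih =>
    simp only [cons_apply]
    cases y
    case K0 => rw [sh_mc, sh_K0_prod]; simp only [tpG, tpK0, tdual_map, ih]; rfl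
    case K1 => rw [sh_mc, sh_K1_prod]; simp only [tpG, tpK1, tdual_map, ih]; rfl
    case E0 =>
      rw [sh_mc, sh_E0_prod]
      simp only [tpG, tpE0, tdual_comp_sum, mc_sum, WF.sum_apply, ih]
      refine Finset.sum_congr rfl fun k _ =>
        congrArg (fun φ : Fin N → WF => (List.ofFn φ).prod w) (funext fun i => ?_)
      split_ifs <;> rfl
    case E1p =>
      rw [sh_mc, sh_E1p_prod]
      simp only [tpG, tpE1p, tdual_comp_sum, mc_sum, WF.sum_apply, ih]
      refine Finset.sum_congr rfl fun k _ =>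
        congrArg (fun φ : Fin N → WF => (List.ofFn φ).prod w) (funext fun i => ?_)
      split_ifs <;> rfl
    case E1m =>
      rw [sh_mc, sh_E1m_prod]
      simp only [tpG, tpE1m, tdual_comp_sum, mc_sum, WF.sum_apply, ih]
      refine Finset.sum_congr rfl fun k _ =>
        congrArg (fun φ : Fin N → WF => (List.ofFn φ).prod w) (funext fun i => ?_)
      split_ifs <;> rfl

variable (ns) in
/-- The basis of pure tensors of standard basis vectors. -/
def tB : Module.Basis (∀ i, Fin (ns i + 1)) ℂ (TPS ns) :=
  Basis.piTensorProduct fun i => Pi.basisFun ℂ (Fin (ns i + 1))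

lemma tB_apply (j : ∀ i, Fin (ns i + 1)) :
    tB ns j = PiTensorProduct.tprod ℂ fun i => Pi.single (j i) 1 := by
  simp [tB, Basis.piTensorProduct_apply]

lemma tB_coord (j : ∀ i, Fin (ns i + 1)) :
    (tB ns).coord j = tdual fun i => LinearMap.proj (j i) := by
  ext x
  simp [tB, Basis.piTensorProduct_repr_tprod_apply]

variable (ns) in
/-- The highest weight vector `v₀ ⊗ ⋯ ⊗ v₀`. -/
def hv : TPS ns := tB ns 0

variable (ns) in
/-- The coordinate with respect to `v₀ ⊗ ⋯ ⊗ v₀`. -/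
def hf : Module.Dual ℂ (TPS ns) := (tB ns).coord 0

lemma hf_hv : hf ns (hv ns) = 1 := by simp [hf, hv]

lemma mc_hf_hv (q : ℂ) (as : Fin N → ℂ) :
    mc (tpG q ns as) (hf ns) (hv ns) = (List.ofFn fun i => coef q (as i) (ns i) 0).prod := by
  rw [hf, hv, tB_coord, tB_apply, mc_tpG]
  congr 2
  funext i
  exact mc_evG q (as i) (ns i) 0

/-- The weight of the coordinate `j` is `q ^ (∑ ns - 2 ∑ j)`. -/
lemma tB_coord_K1 {q : ℂ} (hq0 : q ≠ 0) (j : ∀ i, Fin (ns i + 1)) :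
    (tB ns).coord j ∘ₗ tpK1 q ns =
      (q ^ (∑ i, ns i) * ((q ^ 2)⁻¹) ^ (∑ i, (j i : ℕ))) • (tB ns).coord j := by
  have : ∀ i, (LinearMap.proj (j i) : Module.Dual ℂ (Fin (ns i + 1) → ℂ)) ∘ₗ evalK1 q (ns i) =
      (q ^ ns i * ((q ^ 2)⁻¹) ^ (j i : ℕ)) • LinearMap.proj (j i) := by
    intro i
    ext v
    simp [evalK1, Matrix.mulVec_diagonal, zpow_sub₀ hq0, zpow_mul, div_eq_mul_inv]
  rw [tB_coord, tpK1, tdual_map]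
  simp only [this]
  rw [tdual_smul, Finset.prod_mul_distrib, Finset.prod_pow_eq_pow_sum, Finset.prod_pow_eq_pow_sum]

lemma finrank_TPS : Module.finrank ℂ (TPS ns) = ∏ i, (ns i + 1) := by
  rw [Module.finrank_eq_card_basis (tB ns)]
  simp

end tensor

/-! ### Modules with a common matrix coefficient -/

section transfer
variable {V V' : Type*} [AddCommGroup V] [Module ℂ V] [AddCommGroup V'] [Module ℂ V']
  {g : Gen → Module.End ℂ V} {g' : Gen → Module.End ℂ V'}

/-- Irreducibility for operators indexed by the generators. -/
def Irr (g : Gen → Module.End ℂ V) : Prop :=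
  ∀ W : Submodule ℂ V, (∀ x, ∀ v ∈ W, g x v ∈ W) → W = ⊥ ∨ W = ⊤

/-- The submodule of `V × V'` generated by `(v, v')`. -/
def diag (g : Gen → Module.End ℂ V) (g' : Gen → Module.End ℂ V') (v : V) (v' : V') :
    Submodule ℂ (V × V') :=
  Submodule.span ℂ (Set.range fun w => (act g v w, act g' v' w))

lemma diag_invariant (v : V) (v' : V') (x : Gen) :
    ∀ p ∈ diag g g' v v', (g x p.1, g' x p.2) ∈ diag g g' v v' := by
  intro p hp
  have : diag g g' v v' ≤ (diag g g' v v').comap ((g x).prodMap (g' x)) := by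
    refine Submodule.span_le.mpr ?_
    rintro _ ⟨w, rfl⟩
    exact Submodule.subset_span ⟨x :: w, rfl⟩
  exact this hp

lemma diag_coeff {f : Module.Dual ℂ V} {f' : Module.Dual ℂ V'} {v : V} {v' : V'}
    (h : mc g f v = mc g' f' v') : ∀ p ∈ diag g g' v v', f p.1 = f' p.2 := by
  intro p hp
  have : diag g g' v v' ≤
      LinearMap.ker (f ∘ₗ LinearMap.fst ℂ V V' - f' ∘ₗ LinearMap.snd ℂ V V') := by
    refine Submodule.span_le.mpr ?_
    rintro _ ⟨w, rfl⟩
    exact sub_eq_zero.mpr (congrFun h w)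
  exact sub_eq_zero.mp (this hp)

lemma mem_diag (v : V) (v' : V') : (v, v') ∈ diag g g' v v' := Submodule.subset_span ⟨[], rfl⟩

lemma diag_fst (hg : Irr g) {v : V} (hv : v ≠ 0) (v' : V') (u : V) :
    ∃ u', (u, u') ∈ diag g g' v v' := by
  have hinv : ∀ x, ∀ y ∈ (diag g g' v v').map (LinearMap.fst ℂ V V'),
      g x y ∈ (diag g g' v v').map (LinearMap.fst ℂ V V') := by
    rintro x _ ⟨p, hp, rfl⟩
    exact ⟨_, diag_invariant v v' x p hp, rfl⟩
  rcases hg _ hinv with h | h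
  · exact absurd ((Submodule.mem_bot ℂ).mp (h ▸ ⟨_, mem_diag v v', rfl⟩)) hv
  · obtain ⟨⟨_, u'⟩, hu, rfl⟩ := h.symm ▸ (Submodule.mem_top : u ∈ ⊤)
    exact ⟨u', hu⟩

/-- If `V` is irreducible, the submodule generated by `(v, v')` meets `V × 0` trivially, since this
intersection lies in the kernel of `f`. -/
lemma diag_snd (hg : Irr g) {f : Module.Dual ℂ V} {f' : Module.Dual ℂ V'} {v : V} {v' : V'}
    (hfv : f v ≠ 0) (h : mc g f v = mc g' f' v') {u : V} (hu : (u, (0 : V')) ∈ diag g g' v v') :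
    u = 0 := by
  have hinv : ∀ x, ∀ y ∈ (diag g g' v v').comap (LinearMap.inl ℂ V V'),
      g x y ∈ (diag g g' v v').comap (LinearMap.inl ℂ V V') := by
    intro x y hy
    simpa using diag_invariant v v' x _ hy
  rcases hg _ hinv with h1 | h1
  · exact (Submodule.mem_bot ℂ).mp (h1 ▸ hu)
  · have hv : (v, (0 : V')) ∈ diag g g' v v' :=
      (h1.symm ▸ Submodule.mem_top : v ∈ (diag g g' v v').comap (LinearMap.inl ℂ V V'))
    exact absurd ((diag_coeff h _ hv).trans (map_zero f')) hfv

/-- An irreducible module is, up to isomorphism, a subquotient of every other module with the same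
matrix coefficient. -/
lemma finrank_le_of_mc_eq [FiniteDimensional ℂ V] [FiniteDimensional ℂ V'] (hg : Irr g)
    {f : Module.Dual ℂ V} {f' : Module.Dual ℂ V'} {v : V} {v' : V'}
    (hfv : f v ≠ 0) (h : mc g f v = mc g' f' v') :
    Module.finrank ℂ V ≤ Module.finrank ℂ V' := by
  have hv : v ≠ 0 := by rintro rfl; simp at hfv
  calc Module.finrank ℂ V ≤ Module.finrank ℂ (diag g g' v v') :=
        LinearMap.finrank_le_finrank_of_surjective
          (f := LinearMap.fst ℂ V V' ∘ₗ (diag g g' v v').subtype) fun u => by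
            obtain ⟨u', hu⟩ := diag_fst (g' := g') hg hv v' u
            exact ⟨⟨_, hu⟩, rfl⟩
    _ ≤ _ := LinearMap.finrank_le_finrank_of_injective
          (f := LinearMap.snd ℂ V V' ∘ₗ (diag g g' v v').subtype) <| by
            refine (injective_iff_map_eq_zero _).mpr ?_
            rintro ⟨⟨u, u'⟩, hu⟩ (rfl : u' = 0)
            obtain rfl := diag_snd hg hfv h hu
            rfl

/-- Irreducible modules with a common matrix coefficient, nonzero on the empty word, are isomorphic:
the submodule of `V × V'` generated by `(v, v')` is the graph of an isomorphism. -/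
lemma exists_equiv_of_mc_eq (hg : Irr g) (hg' : Irr g')
    {f : Module.Dual ℂ V} {f' : Module.Dual ℂ V'} {v : V} {v' : V'}
    (hfv : f v ≠ 0) (hfv' : f' v' ≠ 0) (h : mc g f v = mc g' f' v') :
    ∃ σ : V ≃ₗ[ℂ] V', ∀ x u, σ (g x u) = g' x (σ u) := by
  have hv : v ≠ 0 := by rintro rfl; simp at hfv
  have hv' : v' ≠ 0 := by rintro rfl; simp at hfv'
  have hswap : ∀ {u u'}, (u', u) ∈ diag g' g v' v ↔ (u, u') ∈ diag g g' v v' := by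
    have : diag g' g v' v = (diag g g' v v').map (LinearEquiv.prodComm ℂ V V').toLinearMap := by
      rw [diag, diag, Submodule.map_span, ← Set.range_comp]
      rfl
    intro u u'
    rw [this]
    constructor
    · rintro ⟨⟨_, _⟩, h1, h2⟩
      cases h2
      exact h1
    · exact fun h1 => ⟨_, h1, rfl⟩
  let p1 := LinearMap.fst ℂ V V' ∘ₗ (diag g g' v v').subtype
  let p2 := LinearMap.snd ℂ V V' ∘ₗ (diag g g' v v').subtype
  have b1 : Function.Bijective p1 := by
    constructor
    · refine (injective_iff_map_eq_zero _).mpr ?_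
      rintro ⟨⟨u, u'⟩, hu⟩ (rfl : u = 0)
      obtain rfl := diag_snd hg' hfv' h.symm (hswap.mpr hu)
      rfl
    · intro u
      obtain ⟨u', hu⟩ := diag_fst (g' := g') hg hv v' u
      exact ⟨⟨_, hu⟩, rfl⟩
  have b2 : Function.Bijective p2 := by
    constructor
    · refine (injective_iff_map_eq_zero _).mpr ?_
      rintro ⟨⟨u, u'⟩, hu⟩ (rfl : u' = 0)
      obtain rfl := diag_snd hg hfv h hu
      rfl
    · intro u'
      obtain ⟨u, hu⟩ := diag_fst (g' := g) hg' hv' v u'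
      exact ⟨⟨_, hswap.mp hu⟩, rfl⟩
  let e1 := LinearEquiv.ofBijective p1 b1
  let e2 := LinearEquiv.ofBijective p2 b2
  refine ⟨e1.symm.trans e2, fun x u => ?_⟩
  obtain ⟨p, rfl⟩ := e1.surjective u
  have : g x (e1 p) = e1 ⟨_, diag_invariant v v' x p.1 p.2⟩ := rfl
  rw [this, LinearEquiv.trans_apply, LinearEquiv.trans_apply, LinearEquiv.symm_apply_apply,
    LinearEquiv.symm_apply_apply]
  rfl

lemma map_act {σ : V →ₗ[ℂ] V'} (hσ : ∀ x u, σ (g x u) = g' x (σ u)) (v : V) (w : List Gen) :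
    σ (act g v w) = act g' (σ v) w := by
  induction w with
  | nil => rfl
  | cons x w ih => exact (hσ x _).trans (congrArg (g' x) ih)

lemma act_smul (c : ℂ) (v : V) (w : List Gen) : act g (c • v) w = c • act g v w := by
  induction w with
  | nil => rfl
  | cons x w ih => exact (congrArg (g x) ih).trans (map_smul _ _ _)

end transfer

/-! ### The highest weight coefficient is an invariant of the module -/

section weight
variable {q : ℂ} {N N' : ℕ} {ns : Fin N → ℕ} {ns' : Fin N' → ℕ}

lemma coord_K1 (hq0 : q ≠ 0) (j : ∀ i, Fin (ns i + 1)) (u : TPS ns) :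
    (tB ns).coord j (tpK1 q ns u) =
      q ^ (∑ i, ns i) * ((q ^ 2)⁻¹) ^ (∑ i, (j i : ℕ)) * (tB ns).coord j u :=
  LinearMap.congr_fun (tB_coord_K1 hq0 j) u

lemma tpK1_tB (hq0 : q ≠ 0) (j : ∀ i, Fin (ns i + 1)) :
    tpK1 q ns (tB ns j) = (q ^ (∑ i, ns i) * ((q ^ 2)⁻¹) ^ (∑ i, (j i : ℕ))) • tB ns j := by
  refine (tB ns).ext_elem fun k => ?_
  have := coord_K1 hq0 k (tB ns j)
  simp only [Module.Basis.coord_apply] at this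
  rw [this, map_smul, Finsupp.smul_apply, smul_eq_mul, Module.Basis.repr_self]
  by_cases h : j = k
  · rw [h]
  · rw [Finsupp.single_eq_of_ne (Ne.symm h), mul_zero, mul_zero]

/-- The weights of a basis vector and of a coordinate which does not vanish on its image agree. -/
lemma weight_eq (hq0 : q ≠ 0) (hq : ∀ n : ℕ, 0 < n → q ^ n ≠ 1) {σ : TPS ns →ₗ[ℂ] TPS ns'}
    (hσ : ∀ u, σ (tpK1 q ns u) = tpK1 q ns' (σ u)) {j : ∀ i, Fin (ns i + 1)}
    {k : ∀ i, Fin (ns' i + 1)} (h : (tB ns').coord k (σ (tB ns j)) ≠ 0) :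
    ∑ i, ns i + 2 * ∑ i, (k i : ℕ) = ∑ i, ns' i + 2 * ∑ i, (j i : ℕ) := by
  have h1 := congrArg ((tB ns').coord k) (hσ (tB ns j))
  rw [coord_K1 hq0, tpK1_tB hq0, map_smul, map_smul, smul_eq_mul] at h1
  have h2 := mul_right_cancel₀ h h1
  rw [inv_pow, inv_pow, ← pow_mul, ← pow_mul, ← div_eq_mul_inv, ← div_eq_mul_inv,
    div_eq_div_iff (pow_ne_zero _ hq0) (pow_ne_zero _ hq0), ← pow_add, ← pow_add] at h2
  exact pow_inj hq0 hq h2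

lemma sum_eq_zero_iff {j : ∀ i, Fin (ns i + 1)} : ∑ i, (j i : ℕ) = 0 ↔ j = 0 := by
  rw [Finset.sum_eq_zero_iff]
  exact ⟨fun h => funext fun i => Fin.ext (h i (Finset.mem_univ i)), fun h i _ => h ▸ rfl⟩

lemma deg_le (hq0 : q ≠ 0) (hq : ∀ n : ℕ, 0 < n → q ^ n ≠ 1) {σ : TPS ns →ₗ[ℂ] TPS ns'}
    (hinj : Function.Injective σ)
    (hσ : ∀ u, σ (tpK1 q ns u) = tpK1 q ns' (σ u)) : ∑ i, ns i ≤ ∑ i, ns' i := by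
  by_contra hlt
  refine (tB ns).ne_zero 0 (hinj (Eq.trans ?_ (map_zero σ).symm))
  refine (tB ns').ext_elem fun k => ?_
  by_contra hk
  have := weight_eq hq0 hq hσ (j := 0) (k := k) (by simpa using hk)
  rw [sum_eq_zero_iff.mpr rfl] at this
  omega

/-- An isomorphism maps highest weight vector to highest weight vector, up to a scalar, and
dually; hence it preserves the highest weight coefficient. -/
lemma mc_eq_of_equiv (hq0 : q ≠ 0) (hq : ∀ n : ℕ, 0 < n → q ^ n ≠ 1) {as : Fin N → ℂ}
    {as' : Fin N' → ℂ} (σ : TPS ns ≃ₗ[ℂ] TPS ns')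
    (hσ : ∀ x u, σ (tpG q ns as x u) = tpG q ns' as' x (σ u)) :
    mc (tpG q ns as) (hf ns) (hv ns) = mc (tpG q ns' as') (hf ns') (hv ns') := by
  have hK : ∀ u, σ.toLinearMap (tpK1 q ns u) = tpK1 q ns' (σ.toLinearMap u) := hσ .K1
  have hK' : ∀ u, σ.symm.toLinearMap (tpK1 q ns' u) = tpK1 q ns (σ.symm.toLinearMap u) := by
    intro u
    apply σ.injective
    simpa using (hK (σ.symm u)).symm
  have hd : ∑ i, ns i = ∑ i, ns' i :=
    (deg_le hq0 hq σ.injective hK).antisymm (deg_le hq0 hq σ.symm.injective hK')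
  set c := hf ns' (σ (hv ns)) with hc
  have h1 : σ (hv ns) = c • hv ns' := by
    refine (tB ns').ext_elem fun k => ?_
    by_cases hk : k = 0
    · subst hk
      simp [hv, hc, hf]
    · rw [map_smul, hv, hv, (tB ns').repr_self, Finsupp.smul_apply, Finsupp.single_eq_of_ne hk,
        smul_zero]
      by_contra h
      have := weight_eq hq0 hq hK (j := 0) (k := k) h
      rw [sum_eq_zero_iff.mpr rfl] at this
      exact hk (sum_eq_zero_iff.mp (by omega))
  have h2 : hf ns' ∘ₗ σ.toLinearMap = c • hf ns := by
    refine (tB ns).ext fun j => ?_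
    by_cases hj : j = 0
    · subst hj
      rw [LinearMap.smul_apply, smul_eq_mul, ← hv, hf_hv, mul_one]
      rfl
    · rw [LinearMap.smul_apply, hf, hf, Module.Basis.coord_apply, Module.Basis.repr_self,
        Finsupp.single_eq_of_ne (Ne.symm hj), smul_zero]
      by_contra h
      have := weight_eq hq0 hq hK (j := j) (k := 0) h
      rw [sum_eq_zero_iff.mpr rfl] at this
      exact hj (sum_eq_zero_iff.mp (by omega))
  have hc0 : c ≠ 0 := by
    intro h0
    rw [h0, zero_smul, map_eq_zero_iff σ σ.injective] at h1
    exact (tB ns).ne_zero 0 h1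
  funext w
  apply mul_left_cancel₀ hc0
  calc c * hf ns (act (tpG q ns as) (hv ns) w)
      = hf ns' (σ (act (tpG q ns as) (hv ns) w)) := (LinearMap.congr_fun h2 _).symm
    _ = hf ns' (act (tpG q ns' as') (σ (hv ns)) w) :=
        congrArg (hf ns') (map_act (σ := σ.toLinearMap) hσ _ _)
    _ = c * hf ns' (act (tpG q ns' as') (hv ns') w) := by
        rw [h1, act_smul, map_smul, smul_eq_mul]

end weight

/-! ### Families of strings attached to tensor products -/

section family
variable {q : ℂ} {N N' : ℕ} {ns : Fin N → ℕ} {ns' : Fin N' → ℕ} {as : Fin N → ℂ}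
  {as' : Fin N' → ℂ}

/-- The string attached to `V(ℓ,a)`, given by its length and its first element `a q^(1-ℓ)`. -/
def evStr (q : ℂ) (ℓ : ℕ) (a : ℂ) : ℕ × ℂ := (ℓ, a * q ^ (1 - (ℓ : ℤ)))

/-- The strings attached to the factors of a tensor product of evaluation modules. -/
def fam (q : ℂ) {N : ℕ} (ns : Fin N → ℕ) (as : Fin N → ℂ) : List (ℕ × ℂ) :=
  List.ofFn fun i => evStr q (ns i) (as i)

lemma mc_eq_strs (hq0 : q ≠ 0) (h : q - q⁻¹ ≠ 0) :
    ∃ L : List ℂ, (L : Multiset ℂ) = strs q (fam q ns as) ∧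
      mc (tpG q ns as) (hf ns) (hv ns) = (L.map fun c => coef q c 1 0).prod := by
  refine ⟨(fam q ns as).flatMap fun p => strL q p.1 p.2, (Multiset.coe_bind _ _).symm, ?_⟩
  rw [mc_hf_hv, List.map_flatMap, List.flatMap_def, List.prod_flatten, List.map_map, fam,
    List.map_ofFn]
  congr 2
  funext i
  rw [Function.comp, Function.comp, ← coef_eq_prod hq0 h, evStr, mul_assoc, ← zpow_add₀ hq0]
  simp

/-- The highest weight coefficient and the union of the strings determine each other. -/
lemma mc_eq_iff (hq0 : q ≠ 0) (hq : ∀ n : ℕ, 0 < n → q ^ n ≠ 1) (h : q - q⁻¹ ≠ 0) :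
    mc (tpG q ns as) (hf ns) (hv ns) = mc (tpG q ns' as') (hf ns') (hv ns') ↔
      strs q (fam q ns as) = strs q (fam q ns' as') := by
  obtain ⟨L, hL, e⟩ := mc_eq_strs (ns := ns) (as := as) hq0 h
  obtain ⟨L', hL', e'⟩ := mc_eq_strs (ns := ns') (as := as') hq0 h
  rw [e, e', ← hL, ← hL']
  exact ⟨prod_inj hq0 hq h, fun h1 => prod_perm hq0 h (Multiset.coe_eq_coe.mp h1)⟩

lemma finrank_eq_fdim : Module.finrank ℂ (TPS ns) = fdim (fam q ns as) := by
  rw [finrank_TPS, fdim, Multiset.map_coe, Multiset.prod_coe, fam, List.map_ofFn, List.prod_ofFn]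
  rfl

lemma exists_fam_eq (hq0 : q ≠ 0) (L : List (ℕ × ℂ)) :
    ∃ (N : ℕ) (ns : Fin N → ℕ) (as : Fin N → ℂ), fam q ns as = L := by
  refine ⟨L.length, fun i => (L.get i).1, fun i => (L.get i).2 * q ^ (((L.get i).1 : ℤ) - 1), ?_⟩
  refine Eq.trans ?_ (List.ofFn_get L)
  refine congrArg List.ofFn (funext fun i => Prod.ext rfl ?_)
  rw [evStr, mul_assoc, ← zpow_add₀ hq0]
  simp

/-- By comparison of dimensions, the family of an irreducible module is minimal. -/
lemma minStr_of_irr (hq0 : q ≠ 0) (hq : ∀ n : ℕ, 0 < n → q ^ n ≠ 1) (h : q - q⁻¹ ≠ 0)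
    (hirr : Irr (tpG q ns as)) : MinStr q (fam q ns as) := by
  intro F hF
  obtain ⟨N', ns', as', hfam⟩ := exists_fam_eq hq0 F.toList
  have hF' : ((fam q ns' as' : List (ℕ × ℂ)) : Multiset (ℕ × ℂ)) = F := by rw [hfam, F.coe_toList]
  rw [← hF', ← finrank_eq_fdim, ← finrank_eq_fdim]
  refine finrank_le_of_mc_eq hirr (by rw [hf_hv]; exact one_ne_zero)
    ((mc_eq_iff hq0 hq h).mpr (by rw [hF', hF]))

lemma fam_cons (ℓ n : ℕ) (ℓs : Fin n → ℕ) (as : Fin n → ℂ) :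
    fam q (Fin.cons ℓ ℓs : Fin (n + 1) → ℕ) (Fin.cons 0 as : Fin (n + 1) → ℂ) =
      (ℓ, 0) :: fam q ℓs as := by
  simp [fam, List.ofFn_succ, evStr]

lemma strM_zero (ℓ : ℕ) : strM q (ℓ, 0) = Multiset.replicate ℓ 0 := by
  rw [Multiset.eq_replicate]
  refine ⟨by simp [strM, length_strL], fun c hc => ?_⟩
  obtain ⟨k, _, rfl⟩ := mem_strM.mp hc
  simp

lemma mem_fam {p : ℕ × ℂ} (hp : p ∈ (fam q ns as : Multiset (ℕ × ℂ))) (hq0 : q ≠ 0)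
    (hns : ∀ i, 1 ≤ ns i) (has : ∀ i, as i ≠ 0) : 1 ≤ p.1 ∧ p.2 ≠ 0 := by
  obtain ⟨i, rfl⟩ := (List.mem_ofFn' _ _).mp (Multiset.mem_coe.mp hp)
  exact ⟨hns i, mul_ne_zero (has i) (zpow_ne_zero _ hq0)⟩

lemma evStr_inj (hq0 : q ≠ 0) {ℓ ℓ' : ℕ} {a a' : ℂ} (h : evStr q ℓ a = evStr q ℓ' a') :
    ℓ = ℓ' ∧ a = a' := by
  obtain ⟨h1, h2⟩ := Prod.ext_iff.mp h
  obtain rfl : ℓ = ℓ' := h1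
  exact ⟨rfl, mul_right_cancel₀ (zpow_ne_zero _ hq0) h2⟩

end family

/-- Families with the same multiset of values differ by a permutation of the indices. -/
lemma exists_perm_of_ofFn_eq {α : Type*} {n : ℕ} {f g : Fin n → α}
    (h : (List.ofFn f : Multiset α) = List.ofFn g) : ∃ π : Equiv.Perm (Fin n), ∀ i, f i = g (π i) := by
  classical
  rw [← Fin.univ_val_map, ← Fin.univ_val_map] at h
  have hc : ∀ a, Nonempty ({i // f i = a} ≃ {i // g i = a}) := by
    intro a
    have := congrArg (Multiset.count a) h
    rw [Multiset.count_map, Multiset.count_map] at this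
    refine ⟨Fintype.equivOfCardEq ?_⟩
    rw [Fintype.card_subtype, Fintype.card_subtype]
    simp only [eq_comm (b := a)]
    exact this
  exact ⟨Equiv.ofFiberEquiv fun a => (hc a).some,
    fun i => (Equiv.ofFiberEquiv_map (fun a => (hc a).some) i).symm⟩

/-! ### The classification -/

/-- two irreducible tensor products of evaluation modules are isomorphic
as `U'_q(L(sl₂))`-modules iff `ℓ = ℓ'`, `n = m` and the families `(ℓᵢ,aᵢ)`, `(ℓ'ᵢ,a'ᵢ)`
agree up to a permutation. -/
theorem stmt10 (q : ℂ) (hq0 : q ≠ 0) (hq : ∀ n : ℕ, 0 < n → q ^ n ≠ 1)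
    (ℓ ℓ' n m : ℕ) (ℓs : Fin n → ℕ) (as : Fin n → ℂ) (ℓs' : Fin m → ℕ) (as' : Fin m → ℂ)
    (hℓs : ∀ i, 1 ≤ ℓs i) (has : ∀ i, as i ≠ 0)
    (hℓs' : ∀ i, 1 ≤ ℓs' i) (has' : ∀ i, as' i ≠ 0)
    (hirr : IsIrred (tpE0 q (Fin.cons ℓ ℓs) (Fin.cons 0 as)) (tpE1p q (Fin.cons ℓ ℓs))
      (tpE1m q (Fin.cons ℓ ℓs)) (tpK0 q (Fin.cons ℓ ℓs)) (tpK1 q (Fin.cons ℓ ℓs)))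
    (hirr' : IsIrred (tpE0 q (Fin.cons ℓ' ℓs') (Fin.cons 0 as')) (tpE1p q (Fin.cons ℓ' ℓs'))
      (tpE1m q (Fin.cons ℓ' ℓs')) (tpK0 q (Fin.cons ℓ' ℓs')) (tpK1 q (Fin.cons ℓ' ℓs'))) :
    (∃ σ : TPS (Fin.cons ℓ ℓs) ≃ₗ[ℂ] TPS (Fin.cons ℓ' ℓs'),
      IntertwinesAll σ.toLinearMap
        (tpE0 q (Fin.cons ℓ ℓs) (Fin.cons 0 as)) (tpE1p q (Fin.cons ℓ ℓs))
        (tpE1m q (Fin.cons ℓ ℓs)) (tpK0 q (Fin.cons ℓ ℓs)) (tpK1 q (Fin.cons ℓ ℓs))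
        (tpE0 q (Fin.cons ℓ' ℓs') (Fin.cons 0 as')) (tpE1p q (Fin.cons ℓ' ℓs'))
        (tpE1m q (Fin.cons ℓ' ℓs')) (tpK0 q (Fin.cons ℓ' ℓs')) (tpK1 q (Fin.cons ℓ' ℓs'))) ↔
    (ℓ = ℓ' ∧ ∃ (hnm : n = m) (π : Equiv.Perm (Fin n)),
      ∀ i : Fin n, ℓs i = ℓs' (Fin.cast hnm (π i)) ∧ as i = as' (Fin.cast hnm (π i))) := by
  have h : q - q⁻¹ ≠ 0 := by
    intro h
    apply hq 2 two_pos
    rw [sq]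
    nth_rw 1 [sub_eq_zero.mp h]
    exact inv_mul_cancel₀ hq0
  have hI : Irr (tpG q (Fin.cons ℓ ℓs : Fin (n + 1) → ℕ) (Fin.cons 0 as)) := fun W hW =>
    hirr W (hW .E0) (hW .E1p) (hW .E1m) (hW .K0) (hW .K1)
  have hI' : Irr (tpG q (Fin.cons ℓ' ℓs' : Fin (m + 1) → ℕ) (Fin.cons 0 as')) := fun W hW =>
    hirr' W (hW .E0) (hW .E1p) (hW .E1m) (hW .K0) (hW .K1)
  constructor
  · rintro ⟨σ, h1, h2, h3, h4, h5⟩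
    have hσ : ∀ x u, σ (tpG q (Fin.cons ℓ ℓs : Fin (n + 1) → ℕ) (Fin.cons 0 as) x u) =
        tpG q (Fin.cons ℓ' ℓs' : Fin (m + 1) → ℕ) (Fin.cons 0 as') x (σ u) := by
      intro x u
      cases x
      exacts [LinearMap.congr_fun h4 u, LinearMap.congr_fun h5 u, LinearMap.congr_fun h1 u,
        LinearMap.congr_fun h2 u, LinearMap.congr_fun h3 u]
    have hs := (mc_eq_iff hq0 hq h).mp (mc_eq_of_equiv hq0 hq σ hσ)
    have hm := minStr_of_irr hq0 hq h hI
    have hm' := minStr_of_irr hq0 hq h hI'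
    rw [fam_cons, ← Multiset.cons_coe] at hm hm'
    rw [fam_cons, fam_cons, ← Multiset.cons_coe, ← Multiset.cons_coe, strs_cons, strs_cons,
      strM_zero, strM_zero] at hs
    have hF := fun p hp => mem_fam (q := q) (p := p) (ns := ℓs) (as := as) hp hq0 hℓs has
    have hF' := fun p hp => mem_fam (q := q) (p := p) (ns := ℓs') (as := as') hp hq0 hℓs' has'
    have hz : ∀ {F : Multiset (ℕ × ℂ)}, (∀ p ∈ F, 1 ≤ p.1 ∧ p.2 ≠ 0) →
        (strs q F).count 0 = 0 := by
      intro F hF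
      refine Multiset.count_eq_zero.mpr fun h0 => ?_
      obtain ⟨p, hp, k, _, hk⟩ := mem_strs.mp h0
      exact mul_ne_zero (hF p hp).2 (pow_ne_zero _ hq0) hk.symm
    -- The factors `V(ℓ)` and `V(ℓ')` account exactly for the zeros.
    obtain rfl : ℓ = ℓ' := by
      have := congrArg (Multiset.count 0) hs
      simpa [hz hF, hz hF'] using this
    have hs' := add_left_cancel hs
    have hFF := hm.of_cons.unique hq0 hq hm'.of_cons hF hF' hs'
    obtain rfl : n = m := by simpa [fam] using congrArg Multiset.card hFF
    obtain ⟨π, hπ⟩ := exists_perm_of_ofFn_eq hFF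
    exact ⟨rfl, rfl, π, fun i => evStr_inj hq0 (hπ i)⟩
  · rintro ⟨rfl, rfl, π, hπ⟩
    have hfam : (fam q ℓs as).Perm (fam q ℓs' as') := by
      have : fam q ℓs as = List.ofFn ((fun i => evStr q (ℓs' i) (as' i)) ∘ π) :=
        congrArg List.ofFn (funext fun i => congrArg₂ (evStr q) (hπ i).1 (hπ i).2)
      rw [this]
      exact π.ofFn_comp_perm _
    have hs : strs q (fam q (Fin.cons ℓ ℓs : Fin (n + 1) → ℕ) (Fin.cons 0 as)) =
        strs q (fam q (Fin.cons ℓ ℓs' : Fin (n + 1) → ℕ) (Fin.cons 0 as')) := by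
      rw [fam_cons, fam_cons, Multiset.coe_eq_coe.mpr (hfam.cons _)]
    obtain ⟨σ, hσ⟩ := exists_equiv_of_mc_eq hI hI' (by rw [hf_hv]; exact one_ne_zero)
      (by rw [hf_hv]; exact one_ne_zero) ((mc_eq_iff hq0 hq h).mpr hs)
    exact ⟨σ, LinearMap.ext (hσ .E0), LinearMap.ext (hσ .E1p), LinearMap.ext (hσ .E1m),
      LinearMap.ext (hσ .K0), LinearMap.ext (hσ .K1)⟩

end
end

section
/- Let V be a finite-dimensional irreducible U_q(L(sl₂))-module of type (1,1). Then V is irreducible as a module over the Borel subalgebra: the only subspaces of V invariant under all of E₀⁺, E₁⁺, K₀, K₀^{−1} are 0 and V. -/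
/-!
The statement follows from the representation theory of the two copies of `U_q(sl₂)` inside
`U_q(L(sl₂))`, namely `(E₀⁺, E₀⁻, K₀)` and `(E₁⁺, E₁⁻, K₁)`.

Write `V_m` for the `q^m`-eigenspace of `K₀`, which is the `q^(-m)`-eigenspace of `K₁`. In a
finite-dimensional `U_q(sl₂)`-module the power `E^k` of the raising operator is injective on the
weight space of weight `-k` (`IsUqSl2.eq_zero_of_pow`). If `W` is stable under the Borel
subalgebra and `W_m = W ∩ V_m`, then `(E₀⁺)^k : W_{-k} → W_k` and `(E₁⁺)^k : W_k → W_{-k}` are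
both injective, hence bijective by finite-dimensionality.

A subspace `W` stable under `E` and `K` for which every `E^k : W_{-k} → W_k` is onto is stable
under `F` (`IsUqSl2.lower_mem`): it is a sum of full strings `v, Ev, …, E^k v` with `v` of weight
`-k` and `Fv = 0`. Hence `W` is stable under `E₀⁻` and, symmetrically, under `E₁⁻`; irreducibility
of `V` finishes the argument.
-/

open scoped TensorProduct

noncomputable section

/-- A `U_q(L(sl₂))`-module structure: operators `(E₀⁺, E₀⁻, E₁⁺, E₁⁻, K₀, K₁)` with
`K₀, K₁` invertible, `K₀K₁ = 1` and the defining relations of `U_q(L(sl₂))`. -/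
structure IsUqLRep (q : ℂ) {V : Type*} [AddCommGroup V] [Module ℂ V]
    (E0p E0m E1p E1m K0 K1 : Module.End ℂ V) : Prop where
  K0K1 : K0 * K1 = 1
  K1K0 : K1 * K0 = 1
  K0E0p : K0 * E0p = q ^ 2 • (E0p * K0)
  K0E0m : K0 * E0m = (q ^ 2)⁻¹ • (E0m * K0)
  K1E1p : K1 * E1p = q ^ 2 • (E1p * K1)
  K1E1m : K1 * E1m = (q ^ 2)⁻¹ • (E1m * K1)
  K0E1p : K0 * E1p = (q ^ 2)⁻¹ • (E1p * K0)
  K0E1m : K0 * E1m = q ^ 2 • (E1m * K0)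
  K1E0p : K1 * E0p = (q ^ 2)⁻¹ • (E0p * K1)
  K1E0m : K1 * E0m = q ^ 2 • (E0m * K1)
  comm0 : E0p * E0m - E0m * E0p = (q - q⁻¹)⁻¹ • (K0 - K1)
  comm1 : E1p * E1m - E1m * E1p = (q - q⁻¹)⁻¹ • (K1 - K0)
  mix01 : E0p * E1m = E1m * E0p
  mix10 : E1p * E0m = E0m * E1p
  serreP01 : brk E0p (brkq q⁻¹ E0p (brkq q E0p E1p)) = 0
  serreP10 : brk E1p (brkq q⁻¹ E1p (brkq q E1p E0p)) = 0
  serreM01 : brk E0m (brkq q⁻¹ E0m (brkq q E0m E1m)) = 0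
  serreM10 : brk E1m (brkq q⁻¹ E1m (brkq q E1m E0m)) = 0

/-! ### The algebra `U_q(sl₂)` -/

/-- Operators `E, F, K, K'` on `V` satisfying the relations of `U_q(sl₂)`, with `K' = K⁻¹`. -/
structure IsUqSl2 (q : ℂ) {V : Type*} [AddCommGroup V] [Module ℂ V]
    (E F K K' : Module.End ℂ V) : Prop where
  K_inv : K * K' = 1
  inv_K : K' * K = 1
  KE : K * E = q ^ 2 • (E * K)
  KF : K * F = (q ^ 2)⁻¹ • (F * K)
  comm : E * F - F * E = (q - q⁻¹)⁻¹ • (K - K')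

/-! ### Powers of `q` and the commutation scalars -/

lemma zpow_ne_one_of_not_root {q : ℂ} (hq : ∀ n : ℕ, 0 < n → q ^ n ≠ 1)
    {m : ℤ} (hm : m ≠ 0) : q ^ m ≠ 1 := by
  rcases lt_trichotomy m 0 with h | h | h
  · obtain ⟨n, rfl⟩ : ∃ n : ℕ, m = -(n : ℤ) := ⟨m.natAbs, by omega⟩
    rw [zpow_neg, zpow_natCast]
    intro h1
    exact hq n (by omega) (inv_eq_one.mp h1)
  · exact absurd h hm
  · obtain ⟨n, rfl⟩ : ∃ n : ℕ, m = (n : ℤ) := ⟨m.natAbs, by omega⟩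
    rw [zpow_natCast]
    exact hq n (by omega)

lemma zpow_inj_of_not_root {q : ℂ} (hq0 : q ≠ 0) (hq : ∀ n : ℕ, 0 < n → q ^ n ≠ 1)
    {m n : ℤ} (h : q ^ m = q ^ n) : m = n := by
  by_contra hne
  refine zpow_ne_one_of_not_root hq (sub_ne_zero.mpr hne) ?_
  rw [zpow_sub₀ hq0, h, div_self (zpow_ne_zero _ hq0)]

/-- The scalar in `F E^n v = E^n F v - γ_n E^(n-1) v`, for `v` of weight `m`. -/
def gam (q : ℂ) (m : ℤ) (n : ℕ) : ℂ :=
  ∑ i ∈ Finset.range n, (q - q⁻¹)⁻¹ * (q ^ (m + 2 * i) - q ^ (-(m + 2 * i)))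

lemma gam_closed {q : ℂ} (hq0 : q ≠ 0) (hqq : q - q⁻¹ ≠ 0) (m : ℤ) (n : ℕ) :
    gam q m n * (q - q⁻¹) ^ 2 =
      (q ^ (n : ℤ) - q ^ (-(n : ℤ))) * (q ^ (m + n - 1) - q ^ (-(m + n - 1))) := by
  induction n with
  | zero => simp [gam]
  | succ n ih =>
    have hstep : gam q m (n + 1) * (q - q⁻¹) ^ 2 = gam q m n * (q - q⁻¹) ^ 2 +
        (q - q⁻¹) * (q ^ (m + 2 * n) - q ^ (-(m + 2 * n))) := by
      rw [gam, Finset.sum_range_succ, ← gam]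
      generalize q - q⁻¹ = s at hqq
      have hs : s⁻¹ * s ^ 2 = s := by field_simp
      rw [add_mul, mul_right_comm, hs]
    rw [hstep, ih]
    have hq2 : q ^ (2 * (n : ℤ)) = q ^ n * q ^ n := by
      rw [two_mul, zpow_add₀ hq0, zpow_natCast]
    push_cast
    simp only [zpow_neg, zpow_add₀ hq0, zpow_sub₀ hq0, zpow_one, hq2, zpow_natCast]
    have h1 : q ^ n ≠ 0 := pow_ne_zero _ hq0
    have h2 : q ^ m ≠ 0 := zpow_ne_zero _ hq0
    generalize q ^ n = a at *
    generalize q ^ m = b at *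
    field_simp
    ring

lemma sub_inv_ne_zero_of_not_root {q : ℂ} (hq0 : q ≠ 0) (hq : ∀ n : ℕ, 0 < n → q ^ n ≠ 1) :
    q - q⁻¹ ≠ 0 := by
  intro h
  apply hq 2 (by norm_num)
  field_simp at h
  linear_combination h

lemma gam_ne_zero {q : ℂ} (hq0 : q ≠ 0) (hq : ∀ n : ℕ, 0 < n → q ^ n ≠ 1) {k n : ℕ}
    (hn : 0 < n) (hnk : n ≤ k) : gam q (-(k : ℤ)) n ≠ 0 := by
  intro h
  have h1 := gam_closed hq0 (sub_inv_ne_zero_of_not_root hq0 hq) (-(k : ℤ)) n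
  rw [h, zero_mul] at h1
  rcases mul_eq_zero.mp h1.symm with h2 | h2
  · have := zpow_inj_of_not_root hq0 hq (sub_eq_zero.mp h2)
    omega
  · have := zpow_inj_of_not_root hq0 hq (sub_eq_zero.mp h2)
    omega

/-! ### Weight spaces of `U_q(sl₂)`-modules -/

/-- Induction downwards on the weights `-k`: only finitely many weight spaces are nonzero, and it
suffices to pass from weight `-(k+2)` to weight `-k`. -/
lemma weight_induction {q : ℂ} (hq0 : q ≠ 0) (hq : ∀ n : ℕ, 0 < n → q ^ n ≠ 1)
    {V : Type*} [AddCommGroup V] [Module ℂ V] [FiniteDimensional ℂ V] (K : Module.End ℂ V)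
    (P : V → Prop) (h0 : P 0)
    (hstep : ∀ k : ℕ, (∀ v, K v = q ^ (-((k + 2 : ℕ) : ℤ)) • v → P v) →
      ∀ v, K v = q ^ (-(k : ℤ)) • v → P v) :
    ∀ k : ℕ, ∀ v, K v = q ^ (-(k : ℤ)) • v → P v := by
  have hfin : {k : ℕ | K.HasEigenvalue (q ^ (-(k : ℤ)))}.Finite := by
    refine Set.Finite.preimage (f := fun k : ℕ => q ^ (-(k : ℤ))) ?_
      (Module.End.finite_hasEigenvalue K)
    intro a _ b _ hab
    have := zpow_inj_of_not_root hq0 hq hab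
    omega
  obtain ⟨B, hB⟩ := hfin.bddAbove
  have hbig : ∀ k : ℕ, B < k → ∀ v, K v = q ^ (-(k : ℤ)) • v → P v := by
    intro k hk v hv
    by_cases hv0 : v = 0
    · rwa [hv0]
    · have : k ≤ B := hB (Module.End.hasEigenvalue_of_hasEigenvector
        ⟨Module.End.mem_eigenspace_iff.mpr hv, hv0⟩)
      omega
  have key : ∀ n k : ℕ, B < k + n → ∀ v, K v = q ^ (-(k : ℤ)) • v → P v := by
    intro n
    induction n with
    | zero => exact fun k hk => hbig k hk
    | succ n ih => exact fun k hk => hstep k (ih (k + 2) (by omega))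
  exact fun k => key (B + 1) k (by omega)

namespace IsUqSl2

variable {q : ℂ} {V : Type*} [AddCommGroup V] [Module ℂ V] {E F K K' : Module.End ℂ V}

lemma inv_weight (hq0 : q ≠ 0) (h : IsUqSl2 q E F K K') {m : ℤ} {v : V} (hv : K v = q ^ m • v) :
    K' v = q ^ (-m) • v := by
  have h1 : K' (K v) = v := by
    rw [← Module.End.mul_apply, h.inv_K, Module.End.one_apply]
  rw [hv, map_smul] at h1
  conv_rhs => rw [← h1]
  rw [smul_smul, ← zpow_add₀ hq0, neg_add_cancel, zpow_zero, one_smul]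

lemma raise_weight (hq0 : q ≠ 0) (h : IsUqSl2 q E F K K') {m : ℤ} {v : V}
    (hv : K v = q ^ m • v) : K (E v) = q ^ (m + 2) • E v := by
  have := LinearMap.congr_fun h.KE v
  simp only [Module.End.mul_apply, LinearMap.smul_apply, hv, map_smul] at this
  rw [this, smul_smul, zpow_add₀ hq0, mul_comm]
  norm_cast

lemma lower_weight (hq0 : q ≠ 0) (h : IsUqSl2 q E F K K') {m : ℤ} {v : V}
    (hv : K v = q ^ m • v) : K (F v) = q ^ (m - 2) • F v := by
  have := LinearMap.congr_fun h.KF v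
  simp only [Module.End.mul_apply, LinearMap.smul_apply, hv, map_smul] at this
  rw [this, smul_smul, zpow_sub₀ hq0, div_eq_mul_inv, mul_comm]
  norm_cast

lemma pow_weight (hq0 : q ≠ 0) (h : IsUqSl2 q E F K K') {m : ℤ} {v : V}
    (hv : K v = q ^ m • v) (n : ℕ) : K ((E ^ n) v) = q ^ (m + 2 * n) • (E ^ n) v := by
  induction n with
  | zero => simpa using hv
  | succ n ih =>
    rw [pow_succ', Module.End.mul_apply, h.raise_weight hq0 ih]
    congr 2
    push_cast
    ring

lemma lower_raise (h : IsUqSl2 q E F K K') (v : V) :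
    F (E v) = E (F v) - (q - q⁻¹)⁻¹ • (K v - K' v) := by
  have := LinearMap.congr_fun h.comm v
  simp only [Module.End.mul_apply, LinearMap.smul_apply, LinearMap.sub_apply] at this
  rw [← this]
  abel

/-- The power of `E` in the correction term is `n`, matching `E^(n+1)` on the left. -/
lemma lower_pow (hq0 : q ≠ 0) (h : IsUqSl2 q E F K K') {m : ℤ} {v : V}
    (hv : K v = q ^ m • v) (n : ℕ) :
    F ((E ^ (n + 1)) v) = (E ^ (n + 1)) (F v) - gam q m (n + 1) • (E ^ n) v := by
  induction n with
  | zero =>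
    simp only [zero_add, pow_one, pow_zero, Module.End.one_apply]
    rw [h.lower_raise, hv, h.inv_weight hq0 hv]
    simp [gam, ← sub_smul, smul_smul]
  | succ n ih =>
    have hw := h.pow_weight hq0 hv (n + 1)
    rw [pow_succ' E (n + 1), Module.End.mul_apply, h.lower_raise, ih, hw, h.inv_weight hq0 hw,
      map_sub, map_smul, ← Module.End.mul_apply E (E ^ n) v, ← pow_succ' E n,
      gam, gam, Finset.sum_range_succ _ (n + 1), ← sub_smul, smul_smul, add_smul, sub_sub]
    simp

variable [FiniteDimensional ℂ V]

/-! ### Raising operators between opposite weight spaces -/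

/-- On the weight space of weight `-k`, the operator `E^k` is injective. By induction downwards on
the weight, a kernel vector `v` has `F v = 0`, as `E^(k+2)` kills `F v`; so `v` is a lowest weight
vector, and `F E^(j+1) v` is a nonzero multiple of `E^j v` for `j < k`. -/
lemma eq_zero_of_pow (hq0 : q ≠ 0) (hq : ∀ n : ℕ, 0 < n → q ^ n ≠ 1) (h : IsUqSl2 q E F K K')
    (k : ℕ) (v : V) (hv : K v = q ^ (-(k : ℤ)) • v) (hk : (E ^ k) v = 0) : v = 0 := by
  -- The induction predicate depends on `v` alone, so it quantifies over all `k` for which `v` has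
  -- weight `-k`; there is only one such `k` when `v ≠ 0`.
  refine weight_induction hq0 hq K
    (fun v => ∀ k : ℕ, K v = q ^ (-(k : ℤ)) • v → (E ^ k) v = 0 → v = 0) (fun _ _ _ => rfl)
    ?_ k v hv k hv hk
  clear hk hv v k
  intro k₀ ih v hv₀ k hv hk
  by_cases hv0 : v = 0
  · exact hv0
  have hkk : k = k₀ := by
    have h1 : (q ^ (-(k : ℤ)) - q ^ (-(k₀ : ℤ))) • v = 0 := by
      rw [sub_smul, ← hv, ← hv₀, sub_self]
    have h2 := (smul_eq_zero.mp h1).resolve_right hv0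
    have := zpow_inj_of_not_root hq0 hq (sub_eq_zero.mp h2)
    omega
  subst hkk
  have hk1 : (E ^ (k + 1)) v = 0 := by
    rw [pow_succ', Module.End.mul_apply, hk, map_zero]
  have hk2 : (E ^ (k + 2)) v = 0 := by
    rw [pow_succ', Module.End.mul_apply, hk1, map_zero]
  have hFw : K (F v) = q ^ (-((k + 2 : ℕ) : ℤ)) • F v := by
    rw [h.lower_weight hq0 hv]
    congr 2
    push_cast
    ring
  have hF : F v = 0 := by
    refine ih (F v) hFw (k + 2) hFw ?_
    have := h.lower_pow hq0 hv (k + 1)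
    rw [hk2, hk1, smul_zero, sub_zero, map_zero] at this
    exact this.symm
  -- Since `F v = 0`, applying `F` to `E^(j+1) v = 0` gives `γ_{j+1} E^j v = 0`.
  have hdown : ∀ j : ℕ, j ≤ k → (E ^ j) v = 0 → v = 0 := by
    intro j
    induction j with
    | zero => exact fun _ hj => by simpa using hj
    | succ j ihj =>
      intro hjk hj
      have := h.lower_pow hq0 hv j
      rw [hj, hF, map_zero, map_zero, zero_sub, eq_comm, neg_eq_zero] at this
      exact ihj (by omega)
        ((smul_eq_zero.mp this).resolve_left (gam_ne_zero hq0 hq (by omega) hjk))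
  exact hdown k le_rfl hk

/-- If `W` is stable under `E` and `K^{±1}` and each `E^k : W_{-k} → W_k` is onto, then `F` maps
every weight vector of `W` into `W`. -/
lemma lower_mem (hq0 : q ≠ 0) (hq : ∀ n : ℕ, 0 < n → q ^ n ≠ 1) (h : IsUqSl2 q E F K K')
    (W : Submodule ℂ V) (hE : ∀ v ∈ W, E v ∈ W) (hK : ∀ v ∈ W, K v ∈ W)
    (hK' : ∀ v ∈ W, K' v ∈ W)
    (hsurj : ∀ k : ℕ, ∀ w ∈ W, K w = q ^ (k : ℤ) • w →
      ∃ u ∈ W, K u = q ^ (-(k : ℤ)) • u ∧ (E ^ k) u = w)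
    (m : ℤ) (w : V) (hw : w ∈ W) (hwt : K w = q ^ m • w) : F w ∈ W := by
  have hFE : ∀ u ∈ W, F u ∈ W → F (E u) ∈ W := by
    intro u hu hFu
    rw [h.lower_raise]
    exact W.sub_mem (hE _ hFu) (W.smul_mem _ (W.sub_mem (hK _ hu) (hK' _ hu)))
  have hpow : ∀ n : ℕ, ∀ u ∈ W, (E ^ n) u ∈ W := by
    intro n u hu
    induction n with
    | zero => simpa using hu
    | succ n ih =>
      rw [pow_succ', Module.End.mul_apply]
      exact hE _ ih
  have hneg : ∀ k : ℕ, ∀ v, K v = q ^ (-(k : ℤ)) • v → (v ∈ W → F v ∈ W) := by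
    refine weight_induction hq0 hq K (fun v => v ∈ W → F v ∈ W) (by simp) ?_
    intro k ih v hv hvW
    -- Subtract from `v` an element `E u` of `W` so that the difference is killed by `E^(k+1)`.
    obtain ⟨u, huW, hu, hEu⟩ := hsurj (k + 2) ((E ^ (k + 1)) v) (hpow _ v hvW) (by
      rw [h.pow_weight hq0 hv]
      congr 2
      push_cast
      ring)
    have hEuw : K (E u) = q ^ (-(k : ℤ)) • E u := by
      rw [h.raise_weight hq0 hu]
      congr 2
      push_cast
      ring
    have hxw : K (v - E u) = q ^ (-(k : ℤ)) • (v - E u) := by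
      rw [map_sub, hv, hEuw, smul_sub]
    have hx1 : (E ^ (k + 1)) (v - E u) = 0 := by
      rw [map_sub, ← hEu, ← Module.End.mul_apply, ← pow_succ, sub_self]
    have hx2 : (E ^ (k + 2)) (v - E u) = 0 := by
      rw [pow_succ', Module.End.mul_apply, hx1, map_zero]
    have hFx : F (v - E u) = 0 := by
      refine h.eq_zero_of_pow hq0 hq (k + 2) _ ?_ ?_
      · rw [h.lower_weight hq0 hxw]
        congr 2
        push_cast
        ring
      · have := h.lower_pow hq0 hxw (k + 1)
        rw [hx2, hx1, smul_zero, sub_zero, map_zero] at this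
        exact this.symm
    rw [map_sub, sub_eq_zero] at hFx
    rw [hFx]
    exact hFE u huW (ih u hu huW)
  rcases le_total m 0 with hm | hm
  · obtain ⟨k, rfl⟩ : ∃ k : ℕ, m = -(k : ℤ) := ⟨m.natAbs, by omega⟩
    exact hneg k w hwt hw
  · obtain ⟨k, rfl⟩ : ∃ k : ℕ, m = (k : ℤ) := ⟨m.natAbs, by omega⟩
    obtain ⟨u, huW, hu, rfl⟩ := hsurj k w hw hwt
    have hn : ∀ n : ℕ, F ((E ^ n) u) ∈ W := by
      intro n
      induction n with
      | zero => simpa using hneg k u hu huW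
      | succ n ih =>
        rw [pow_succ', Module.End.mul_apply]
        exact hFE _ (hpow n u huW) ih
    exact hn k

/-- Two raising operators for opposite gradings: if `W` is stable under both, then
`E^k : W_{-k} → W_k` is onto, since `E^k E₁^k` is an injective endomorphism of `W_k`. -/
lemma exists_preimage {E₁ F₁ : Module.End ℂ V} (hq0 : q ≠ 0) (hq : ∀ n : ℕ, 0 < n → q ^ n ≠ 1)
    (h : IsUqSl2 q E F K K') (h₁ : IsUqSl2 q E₁ F₁ K' K)
    (W : Submodule ℂ V) (hE : ∀ v ∈ W, E v ∈ W) (hE₁ : ∀ v ∈ W, E₁ v ∈ W)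
    (k : ℕ) (w : V) (hw : w ∈ W) (hwt : K w = q ^ (k : ℤ) • w) :
    ∃ u ∈ W, K u = q ^ (-(k : ℤ)) • u ∧ (E ^ k) u = w := by
  have hpow : ∀ A : Module.End ℂ V, (∀ v ∈ W, A v ∈ W) → ∀ n : ℕ, ∀ u ∈ W, (A ^ n) u ∈ W := by
    intro A hA n u hu
    induction n with
    | zero => simpa using hu
    | succ n ih =>
      rw [pow_succ', Module.End.mul_apply]
      exact hA _ ih
  have hdown : ∀ v, K v = q ^ (k : ℤ) • v → K ((E₁ ^ k) v) = q ^ (-(k : ℤ)) • (E₁ ^ k) v := by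
    intro v hv
    have h1 := h₁.inv_weight hq0 (h₁.pow_weight hq0 (h.inv_weight hq0 hv) k)
    rw [h1]
    congr 2
    ring
  have hup : ∀ v, K v = q ^ (-(k : ℤ)) • v → K ((E ^ k) v) = q ^ (k : ℤ) • (E ^ k) v := by
    intro v hv
    rw [h.pow_weight hq0 hv k]
    congr 2
    ring
  let U : Submodule ℂ V := W ⊓ Module.End.eigenspace K (q ^ (k : ℤ))
  have hU : ∀ v ∈ U, (E ^ k * E₁ ^ k) v ∈ U := fun v hv =>
    ⟨hpow E hE k _ (hpow E₁ hE₁ k v hv.1), Module.End.mem_eigenspace_iff.mpr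
      (hup _ (hdown v (Module.End.mem_eigenspace_iff.mp hv.2)))⟩
  have hinj : Function.Injective ((E ^ k * E₁ ^ k).restrict hU) := by
    rw [injective_iff_map_eq_zero]
    rintro ⟨v, hv⟩ hv0
    have hvw := Module.End.mem_eigenspace_iff.mp hv.2
    have h0 : (E ^ k) ((E₁ ^ k) v) = 0 := congrArg Subtype.val hv0
    have h2 := h.eq_zero_of_pow hq0 hq k _ (hdown v hvw) h0
    exact Subtype.ext (h₁.eq_zero_of_pow hq0 hq k v (h.inv_weight hq0 hvw) h2)
  obtain ⟨⟨x, hx⟩, hxw⟩ := LinearMap.injective_iff_surjective.mp hinj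
    ⟨w, hw, Module.End.mem_eigenspace_iff.mpr hwt⟩
  exact ⟨(E₁ ^ k) x, hpow E₁ hE₁ k x hx.1, hdown x (Module.End.mem_eigenspace_iff.mp hx.2),
    congrArg Subtype.val hxw⟩

end IsUqSl2

/-! ### Borel submodules -/

/-- To check that `F` preserves a `K`-stable subspace it suffices to test weight vectors. -/
lemma map_mem_of_weight_vectors {q : ℂ} {V : Type*} [AddCommGroup V] [Module ℂ V]
    [FiniteDimensional ℂ V] {K F : Module.End ℂ V} (ht : IsType11 q K) (W : Submodule ℂ V) (hK : ∀ v ∈ W, K v ∈ W)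
    (hF : ∀ (m : ℤ), ∀ w ∈ W, K w = q ^ m • w → F w ∈ W) : ∀ w ∈ W, F w ∈ W := by
  obtain ⟨d, hd⟩ := ht
  have htop : ⨆ μ : ℂ, Module.End.eigenspace K μ = ⊤ :=
    eq_top_iff.mpr (hd ▸ iSup_le fun i => le_iSup (Module.End.eigenspace K) _)
  have hW : W = ⨆ μ : ℂ, W ⊓ Module.End.eigenspace K μ :=
    Submodule.eq_iSup_inf_genEigenspace 1 hK htop
  have hle : W ≤ W.comap F := by
    conv_lhs => rw [hW]
    refine iSup_le fun μ => ?_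
    by_cases hμ : ∃ m : ℤ, μ = q ^ m
    · obtain ⟨m, rfl⟩ := hμ
      exact fun w hw => hF m w hw.1 (Module.End.mem_eigenspace_iff.mp hw.2)
    · -- An eigenspace for any other eigenvalue is independent of the spanning ones, hence zero.
      have hdis := Module.End.eigenspaces_iSupIndep K μ
      have hbig : ⨆ ν, ⨆ (_ : ν ≠ μ), Module.End.eigenspace K ν = ⊤ := by
        refine eq_top_iff.mpr (hd ▸ iSup_le fun i => ?_)
        exact le_iSup₂_of_le (q ^ (2 * (i : ℤ) - d)) (fun h => hμ ⟨_, h.symm⟩) le_rfl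
      rw [hbig, disjoint_top] at hdis
      rw [hdis, inf_bot_eq]
      exact bot_le
  exact hle

/-- a finite-dimensional irreducible `U_q(L(sl₂))`-module of type `(1,1)`
is irreducible over the Borel subalgebra generated by `E₀⁺, E₁⁺, K₀, K₀⁻¹ = K₁`. -/
theorem stmt12 (q : ℂ) (hq0 : q ≠ 0) (hq : ∀ n : ℕ, 0 < n → q ^ n ≠ 1)
    {V : Type*} [AddCommGroup V] [Module ℂ V] [FiniteDimensional ℂ V]
    (E0p E0m E1p E1m K0 K1 : Module.End ℂ V)
    (h : IsUqLRep q E0p E0m E1p E1m K0 K1)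
    (hirr : ∀ W : Submodule ℂ V,
      (∀ v ∈ W, E0p v ∈ W) → (∀ v ∈ W, E0m v ∈ W) → (∀ v ∈ W, E1p v ∈ W) →
      (∀ v ∈ W, E1m v ∈ W) → (∀ v ∈ W, K0 v ∈ W) → (∀ v ∈ W, K1 v ∈ W) →
      W = ⊥ ∨ W = ⊤)
    (ht : IsType11 q K0) :
    ∀ W : Submodule ℂ V,
      (∀ v ∈ W, E0p v ∈ W) → (∀ v ∈ W, E1p v ∈ W) →
      (∀ v ∈ W, K0 v ∈ W) → (∀ v ∈ W, K1 v ∈ W) →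
      W = ⊥ ∨ W = ⊤ := by
  intro W hE0 hE1 hK0 hK1
  have h0 : IsUqSl2 q E0p E0m K0 K1 := ⟨h.K0K1, h.K1K0, h.K0E0p, h.K0E0m, h.comm0⟩
  have h1 : IsUqSl2 q E1p E1m K1 K0 := ⟨h.K1K0, h.K0K1, h.K1E1p, h.K1E1m, h.comm1⟩
  refine hirr W hE0 ?_ hE1 ?_ hK0 hK1
  · exact map_mem_of_weight_vectors ht W hK0 (h0.lower_mem hq0 hq W hE0 hK0 hK1
      (h0.exists_preimage hq0 hq h1 W hE0 hE1))
  · exact map_mem_of_weight_vectors ht W hK0 fun m w hw hwt =>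
      h1.lower_mem hq0 hq W hE1 hK1 hK0 (h1.exists_preimage hq0 hq h0 W hE1 hE0)
        (-m) w hw (h0.inv_weight hq0 hwt)

end
end
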